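/- With the Koszul complex K_• of f over R: the homology modules satisfy H₄ = H₃ = 0 and H^i_𝔪(H_p) = 0 for every i > 1 and every p. Moreover, for j = 0,1 and every p, H^j_𝔪(H_p)_{(μ,ν)} = 0 for every bidegree (μ,ν) such that H²_𝔪(K_{p+2−j})_{(μ,ν)} = 0 and H³_𝔪(K_{p+3−j})_{(μ,ν)} = 0. -/

import Mathlib

open MvPolynomial

noncomputable section

/-- the coordinate ring `R = k[s₀,s₁,t₀,t₁]` of `ℙ¹ × ℙ¹` (variables `0,1 ↦ s`, `2,3 ↦ t`). -/
abbrev RR (k : Type) [Field k] := MvPolynomial (Fin 4) k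

/-- `R₁ = k[s₀,s₁]`. -/
abbrev R1 (k : Type) [Field k] := MvPolynomial (Fin 2) k

/-- the homogeneous coordinate ring `S = k[x₀,…,x₃]` of `ℙ³`. -/
abbrev SS (k : Type) [Field k] := MvPolynomial (Fin 4) k

variable (k : Type) [Field k] [IsAlgClosed k]

/-- weights of the four variables `s₀,s₁,t₀,t₁` for the `(s,t)`-bigrading of `R`. -/
def stw : Fin 4 → ℤ × ℤ := fun i => if (i : ℕ) ≤ 1 then (1, 0) else (0, 1)

/-- the bihomogeneous piece of `R` of bidegree `(μ,ν)`. -/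
def Rpiece (μ ν : ℤ) : Submodule k (RR k) := weightedHomogeneousSubmodule k stw (μ, ν)

/-- the point of `𝔸⁴` corresponding to a pair of points of `𝔸²`. -/
def pt (a b : Fin 2 → k) : Fin 4 → k := ![a 0, a 1, b 0, b 1]

variable (f : Fin 4 → RR k)

/-- the set of base points of `φ` inside `ℙ¹ × ℙ¹`. -/
def BasePts : Set (Projectivization k (Fin 2 → k) × Projectivization k (Fin 2 → k)) :=
  {P | ∀ i, eval (pt k P.1.rep P.2.rep) (f i) = 0}

/-- `(a,b) ∈ (𝔸²∖0)²` represents a base point of `φ`. -/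
def IsBasePoint (a b : Fin 2 → k) : Prop :=
  a ≠ 0 ∧ b ≠ 0 ∧ ∀ i, eval (pt k a b) (f i) = 0

/-- the prime ideal of the point `((a₀:a₁),(b₀:b₁))` of `ℙ¹ × ℙ¹`. -/
def ptIdeal (a b : Fin 2 → k) : Ideal (RR k) :=
  Ideal.span {C (a 1) * X 0 - C (a 0) * X 1, C (b 1) * X 2 - C (b 0) * X 3}

/-- the ideal `J` is generated by at most `c` elements locally at the point
`((a₀:a₁),(b₀:b₁))` of `ℙ¹ × ℙ¹` (localization-free formulation). -/
def LocGen (J : Ideal (RR k)) (a b : Fin 2 → k) (c : ℕ) : Prop :=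
  ∃ h ∉ ptIdeal k a b, ∃ g : Fin c → RR k, (∀ j, g j ∈ J) ∧
    ∀ x ∈ J, ∃ t : ℕ, h ^ t * x ∈ Ideal.span (Set.range g)

/-- the Hilbert function of `R/J` in bidegree `(μ,ν)`. -/
def HFq (J : Ideal (RR k)) (μ ν : ℤ) : ℕ :=
  Module.finrank k ↥(Rpiece k μ ν) -
    Module.finrank k ↥(J.restrictScalars k ⊓ Rpiece k μ ν)

section LC

variable {B : Type} [CommRing B] {A : Type} [CommRing A] [Algebra B A]
variable {M : Type} [AddCommGroup M] [Module A M] [Module B M] [IsScalarTower B A M]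
variable (u : Fin 4 → A)

/-- Koszul sign. -/
def cechSign (J : Finset (Fin 4)) (j : Fin 4) : A := (-1 : A) ^ ((J.filter (· < j)).card)

/-- the differential of the Koszul cochain complex on the `t`-th powers of
`u₀,…,u₃`; the direct limit over `t` of its cohomology computes the local
cohomology `H^•_{(u₀,…,u₃)}(M)`. -/
def cechD (t : ℕ) : (Finset (Fin 4) → M) →ₗ[B] (Finset (Fin 4) → M) where
  toFun w J := ∑ j ∈ J, (cechSign (A := A) J j * u j ^ t) • w (J.erase j)
  map_add' w w' := by funext J; simp [smul_add, Finset.sum_add_distrib]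
  map_smul' c w := by
    funext J
    simp only [Pi.smul_apply, RingHom.id_apply, Finset.smul_sum]
    refine Finset.sum_congr rfl fun j hj => ?_
    rw [smul_comm]

/-- the transition chain map from level `t` to level `t+a`. -/
def cechTr (a : ℕ) : (Finset (Fin 4) → M) →ₗ[B] (Finset (Fin 4) → M) where
  toFun w J := ((∏ j ∈ J, u j) ^ a) • w J
  map_add' w w' := by funext J; simp
  map_smul' c w := by
    funext J
    simp only [Pi.smul_apply, RingHom.id_apply]
    rw [smul_comm]

variable (P : ℤ → ℤ → Submodule B M)

/-- the bigraded piece `(μ,ν)` of the degree-`i` term of the Koszul cochain complex on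
`u₀^t,…,u₃^t` (each `uⱼ` having bidegree `(1,1)`). -/
def cechC (t i : ℕ) (μ ν : ℤ) : Submodule B (Finset (Fin 4) → M) where
  carrier := {w | ∀ J, (J.card = i → w J ∈ P (μ + t * i) (ν + t * i)) ∧ (J.card ≠ i → w J = 0)}
  zero_mem' := by intro J; simp
  add_mem' := by
    rintro w w' hw hw' J
    refine ⟨fun h => add_mem ((hw J).1 h) ((hw' J).1 h), fun h => ?_⟩
    simp [Pi.add_apply, (hw J).2 h, (hw' J).2 h]
  smul_mem' := by
    rintro c w hw J
    exact ⟨fun h => Submodule.smul_mem _ _ ((hw J).1 h), fun h => by simp [(hw J).2 h]⟩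

/-- cocycles in bidegree `(μ,ν)` at level `t`. -/
def cocyc (t i : ℕ) (μ ν : ℤ) : Submodule B (Finset (Fin 4) → M) :=
  cechC P t i μ ν ⊓ LinearMap.ker (cechD u t)

/-- coboundaries in bidegree `(μ,ν)` at level `t`. -/
def cobd (t i : ℕ) (μ ν : ℤ) : Submodule B (Finset (Fin 4) → M) :=
  match i with
  | 0 => ⊥
  | (j+1) => Submodule.map (cechD u t) (cechC P t j μ ν)

/-- Vanishing of the bigraded piece `H^i_{(u₀,…,u₃)}(M)_{(μ,ν)}` of local cohomology:
every cocycle at a finite level eventually becomes a coboundary in the direct limit. -/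
def LCvanish (i : ℕ) (μ ν : ℤ) : Prop :=
  ∀ t : ℕ, ∀ w ∈ cocyc u P t i μ ν, ∃ a : ℕ, cechTr (B := B) u a w ∈ cobd u P (t + a) i μ ν

/-- the level-`t` cohomology of the graded piece; `H^i_{(u)}(M)_{(μ,ν)}` is the direct
limit over `t` of these. -/
def cohPiece (t i : ℕ) (μ ν : ℤ) : Type :=
  ↥(cocyc u P t i μ ν) ⧸
    (Submodule.comap (cocyc u P t i μ ν).subtype (cobd u P t i μ ν))

instance (t i : ℕ) (μ ν : ℤ) : AddCommGroup (cohPiece u P t i μ ν) :=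
  inferInstanceAs (AddCommGroup (↥(cocyc u P t i μ ν) ⧸
    (Submodule.comap (cocyc u P t i μ ν).subtype (cobd u P t i μ ν))))

instance (t i : ℕ) (μ ν : ℤ) : Module B (cohPiece u P t i μ ν) :=
  inferInstanceAs (Module B (↥(cocyc u P t i μ ν) ⧸
    (Submodule.comap (cocyc u P t i μ ν).subtype (cobd u P t i μ ν))))

end LC

/-- the four generators `s₀t₀, s₀t₁, s₁t₀, s₁t₁` of the irrelevant ideal
`𝔪 = (s₀,s₁)(t₀,t₁)` of `R`. -/
def uR : Fin 4 → RR k := fun i =>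
  X (⟨(i : ℕ) / 2, by omega⟩ : Fin 4) * X (⟨2 + (i : ℕ) % 2, by omega⟩ : Fin 4)
/-- the Koszul differential `K_{p+1} → K_p` of `f` (on `p`-tensors): contraction with
`f` in the first slot. -/
def DK (p : ℕ) : ((Fin (p + 1) → Fin 4) → RR k) →ₗ[RR k] ((Fin p → Fin 4) → RR k) where
  toFun W a := ∑ i, W (Fin.cons i a) * f i
  map_add' W W' := by funext a; simp [add_mul, Finset.sum_add_distrib]
  map_smul' c W := by
    funext a
    simp only [Pi.smul_apply, smul_eq_mul, RingHom.id_apply, Finset.mul_sum]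
    exact Finset.sum_congr rfl fun i _ => by ring

/-- the alternating `p`-tensors: the Koszul module `K_p = Λ^p R⁴`. -/
def AltT (p : ℕ) : Submodule (RR k) ((Fin p → Fin 4) → RR k) where
  carrier := {W | ∀ (a : Fin p → Fin 4) (i j : Fin p), i ≠ j →
    ((a i = a j → W a = 0) ∧ W (a ∘ Equiv.swap i j) = - W a)}
  zero_mem' := by intro a i j hij; simp
  add_mem' := by
    rintro W W' hW hW' a i j hij
    refine ⟨fun h => ?_, ?_⟩
    · simp [Pi.add_apply, (hW a i j hij).1 h, (hW' a i j hij).1 h]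
    · simp [Pi.add_apply, (hW a i j hij).2, (hW' a i j hij).2]
      ring
  smul_mem' := by
    rintro c W hW a i j hij
    refine ⟨fun h => ?_, ?_⟩
    · simp [Pi.smul_apply, (hW a i j hij).1 h]
    · simp [Pi.smul_apply, (hW a i j hij).2]

/-- the `p`-cycles `Z_p` of the Koszul complex `K_•(f;R)`. -/
def ZK (p : ℕ) : Submodule (RR k) ((Fin p → Fin 4) → RR k) :=
  match p with
  | 0 => AltT k 0
  | (q + 1) => AltT k (q + 1) ⊓ LinearMap.ker (DK k f q)

/-- the `p`-boundaries `B_p` of the Koszul complex `K_•(f;R)`. -/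
def BK (p : ℕ) : Submodule (RR k) ((Fin p → Fin 4) → RR k) :=
  Submodule.map (DK k f p) (AltT k (p + 1))

/-- the Koszul homology module `H_p = Z_p/B_p` of `f`. -/
def HK (p : ℕ) : Type :=
  ↥(ZK k f p) ⧸ (Submodule.comap (ZK k f p).subtype (BK k f p))

instance (p : ℕ) : AddCommGroup (HK k f p) :=
  inferInstanceAs (AddCommGroup (↥(ZK k f p) ⧸
    (Submodule.comap (ZK k f p).subtype (BK k f p))))

instance (p : ℕ) : Module (RR k) (HK k f p) :=
  inferInstanceAs (Module (RR k) (↥(ZK k f p) ⧸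
    (Submodule.comap (ZK k f p).subtype (BK k f p))))

instance (p : ℕ) : Module k (HK k f p) :=
  inferInstanceAs (Module k (↥(ZK k f p) ⧸
    (Submodule.comap (ZK k f p).subtype (BK k f p))))

instance (p : ℕ) : IsScalarTower k (RR k) (HK k f p) :=
  inferInstanceAs (IsScalarTower k (RR k) (↥(ZK k f p) ⧸
    (Submodule.comap (ZK k f p).subtype (BK k f p))))

/-- the bidegree-`(μ,ν)` piece of the Koszul module `K_p ≅ ⊕ R(−pm,−pn)` (ambient
`p`-tensors). -/
def KP (m n : ℕ) (p : ℕ) (μ ν : ℤ) : Submodule k ((Fin p → Fin 4) → RR k) :=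
  ⨅ a : Fin p → Fin 4,
    (Rpiece k (μ - p * m) (ν - p * n)).comap (LinearMap.proj a)

/-- the bidegree-`(μ,ν)` piece of the cycles `Z_p`. -/
def PZ (m n : ℕ) (p : ℕ) (μ ν : ℤ) : Submodule k ↥(ZK k f p) :=
  Submodule.comap (((ZK k f p).subtype).restrictScalars k) (KP k m n p μ ν)

/-- the bidegree-`(μ,ν)` piece of the Koszul homology `H_p`. -/
def PH (m n : ℕ) (p : ℕ) (μ ν : ℤ) : Submodule k (HK k f p) :=
  Submodule.map
    (((Submodule.comap (ZK k f p).subtype (BK k f p)).mkQ).restrictScalars k)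
    (PZ k f m n p μ ν)


set_option linter.unusedSectionVars false

section Cech

variable {B : Type} [CommRing B] {A : Type} [CommRing A] [Algebra B A]
variable {L : Type} [AddCommGroup L] [Module A L] [Module B L] [IsScalarTower B A L]
variable {M : Type} [AddCommGroup M] [Module A M] [Module B M] [IsScalarTower B A M]
variable {N : Type} [AddCommGroup N] [Module A N] [Module B N] [IsScalarTower B A N]
variable (u : Fin 4 → A)

lemma cechD_apply (t : ℕ) (w : Finset (Fin 4) → M) (J : Finset (Fin 4)) :
    cechD (B := B) u t w J = ∑ j ∈ J, (cechSign (A := A) J j * u j ^ t) • w (J.erase j) := rfl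

lemma cechTr_apply (a : ℕ) (w : Finset (Fin 4) → M) (J : Finset (Fin 4)) :
    cechTr (B := B) u a w J = ((∏ j ∈ J, u j) ^ a) • w J := rfl

lemma cechD_comp (g : M →ₗ[A] N) (t : ℕ) (w : Finset (Fin 4) → M) :
    cechD (B := B) u t (g ∘ w) = g ∘ cechD (B := B) u t w := by
  funext J
  simp [cechD_apply]

lemma cechTr_comp (g : M →ₗ[A] N) (a : ℕ) (w : Finset (Fin 4) → M) :
    cechTr (B := B) u a (g ∘ w) = g ∘ cechTr (B := B) u a w := by
  funext J
  simp [cechTr_apply]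

lemma cechD_smul (t : ℕ) (c : A) (w : Finset (Fin 4) → M) :
    cechD (B := B) u t (c • w) = c • cechD (B := B) u t w := by
  funext J
  simp only [cechD_apply, Pi.smul_apply, Finset.smul_sum]
  exact Finset.sum_congr rfl fun j _ => smul_comm _ _ _

lemma cechTr_smul (a : ℕ) (c : A) (w : Finset (Fin 4) → M) :
    cechTr (B := B) u a (c • w) = c • cechTr (B := B) u a w := by
  funext J
  simp only [cechTr_apply, Pi.smul_apply]
  exact smul_comm _ _ _

lemma cechTr_add (a b : ℕ) (w : Finset (Fin 4) → M) :
    cechTr (B := B) u b (cechTr (B := B) u a w) = cechTr (B := B) u (a + b) w := by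
  funext J
  simp only [cechTr_apply, smul_smul]
  ring_nf

lemma cechD_cechTr (t a : ℕ) (w : Finset (Fin 4) → M) :
    cechD (B := B) u (t + a) (cechTr (B := B) u a w) =
      cechTr (B := B) u a (cechD (B := B) u t w) := by
  funext J
  simp only [cechD_apply, cechTr_apply, smul_smul, Finset.smul_sum]
  refine Finset.sum_congr rfl fun j hj => ?_
  rw [← Finset.mul_prod_erase J u hj]
  congr 1
  ring

lemma cechSign_swap {J : Finset (Fin 4)} {j l : Fin 4} (hj : j ∈ J) (hl : l ∈ J) (hjl : j ≠ l) :
    cechSign (A := A) J j * cechSign (A := A) (J.erase j) l +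
      cechSign (A := A) J l * cechSign (A := A) (J.erase l) j = 0 := by
  have key : ∀ (J : Finset (Fin 4)) (j l : Fin 4), j ∈ J → l ∈ J → j ≠ l →
      Odd ((J.filter (· < j)).card + ((J.erase j).filter (· < l)).card +
        ((J.filter (· < l)).card + ((J.erase l).filter (· < j)).card)) := by decide
  have h := key J j l hj hl hjl
  simp only [cechSign, ← pow_add]
  rcases Nat.even_or_odd ((J.filter (· < j)).card + ((J.erase j).filter (· < l)).card) with h1 | h1
  · have h2 := (Nat.odd_add.1 h)
    rw [h1.neg_one_pow, (Nat.not_even_iff_odd.1 fun h3 =>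
      (Nat.not_odd_iff_even.2 h1) (h2.2 h3)).neg_one_pow]
    ring
  · rw [h1.neg_one_pow, (Nat.odd_add.1 h |>.1 h1).neg_one_pow]
    ring

lemma cechD_cechD (t : ℕ) (w : Finset (Fin 4) → M) :
    cechD (B := B) u t (cechD (B := B) u t w) = 0 := by
  funext J
  simp only [cechD_apply, Finset.smul_sum, Pi.zero_apply, smul_smul]
  rw [Finset.sum_sigma']
  refine Finset.sum_involution (fun x _ => ⟨x.2, x.1⟩) ?_ ?_ ?_ ?_
  · rintro ⟨j, l⟩ h
    simp only [Finset.mem_sigma, Finset.mem_erase] at h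
    have hs := cechSign_swap (A := A) h.1 h.2.2 h.2.1.symm
    simp only [Finset.erase_right_comm (a := l) (b := j), ← add_smul]
    have : cechSign (A := A) J j * u j ^ t * (cechSign (A := A) (J.erase j) l * u l ^ t) +
      cechSign (A := A) J l * u l ^ t * (cechSign (A := A) (J.erase l) j * u j ^ t) = 0 := by
      linear_combination (u j ^ t * u l ^ t) * hs
    rw [this, zero_smul]
  · rintro ⟨j, l⟩ h _ he
    simp only [Finset.mem_sigma, Finset.mem_erase] at h
    simp only [Sigma.mk.injEq] at he
    exact h.2.1 he.1
  · rintro ⟨j, l⟩ h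
    simp only [Finset.mem_sigma, Finset.mem_erase] at h ⊢
    exact ⟨h.2.2, h.2.1.symm, h.1⟩
  · rintro ⟨j, l⟩ h
    rfl

/-- multiplication by each `uⱼ` shifts the pieces `P` by `(1,1)`. -/
def ShiftStable (P : ℤ → ℤ → Submodule B M) : Prop :=
  ∀ j μ ν x, x ∈ P μ ν → u j • x ∈ P (μ + 1) (ν + 1)

variable {u} {PL : ℤ → ℤ → Submodule B L} {P : ℤ → ℤ → Submodule B M}
  {PN : ℤ → ℤ → Submodule B N}

lemma ShiftStable.pow_smul_mem (hP : ShiftStable u P) (j : Fin 4) (t : ℕ) {μ ν : ℤ} {x : M}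
    (hx : x ∈ P μ ν) : u j ^ t • x ∈ P (μ + t) (ν + t) := by
  induction t with
  | zero => simpa using hx
  | succ t ih =>
    rw [pow_succ', mul_smul]
    have := hP j _ _ _ ih
    push_cast
    simpa only [add_assoc] using this

lemma ShiftStable.prod_smul_mem (hP : ShiftStable u P) (J : Finset (Fin 4)) {μ ν : ℤ} {x : M}
    (hx : x ∈ P μ ν) : (∏ j ∈ J, u j) • x ∈ P (μ + J.card) (ν + J.card) := by
  induction J using Finset.induction_on with
  | empty => simpa using hx
  | insert j J hj ih =>
    rw [Finset.prod_insert hj, mul_smul, Finset.card_insert_of_notMem hj]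
    have := hP j _ _ _ ih
    push_cast
    simpa only [add_assoc] using this

lemma ShiftStable.prod_pow_smul_mem (hP : ShiftStable u P) (J : Finset (Fin 4)) (a : ℕ) {μ ν : ℤ}
    {x : M} (hx : x ∈ P μ ν) :
    (∏ j ∈ J, u j) ^ a • x ∈ P (μ + a * J.card) (ν + a * J.card) := by
  induction a with
  | zero => simpa using hx
  | succ a ih =>
    rw [pow_succ', mul_smul]
    have := hP.prod_smul_mem J ih
    push_cast
    simpa only [add_assoc, add_mul, one_mul] using this

lemma sign_smul_mem (p : Submodule B M) (J : Finset (Fin 4)) (j : Fin 4) {x : M} (hx : x ∈ p) :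
    cechSign (A := A) J j • x ∈ p := by
  unfold cechSign
  rcases neg_one_pow_eq_or A ((J.filter (· < j)).card) with h | h <;> simp [h, hx]

lemma cechD_mem (hP : ShiftStable u P) {t q : ℕ} {μ ν : ℤ} {w : Finset (Fin 4) → M}
    (hw : w ∈ cechC P t q μ ν) : cechD (B := B) u t w ∈ cechC P t (q + 1) μ ν := by
  intro J
  refine ⟨fun hJ => ?_, fun hJ => ?_⟩
  · refine Submodule.sum_mem _ fun j hj => ?_
    rw [mul_smul]
    refine sign_smul_mem _ _ _ ?_
    have h := hP.pow_smul_mem j t ((hw (J.erase j)).1 (by rw [Finset.card_erase_of_mem hj, hJ]; rfl))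
    convert h using 2 <;> push_cast <;> ring
  · refine Finset.sum_eq_zero fun j hj => ?_
    rw [(hw (J.erase j)).2, smul_zero]
    have := Finset.card_erase_add_one hj
    omega

lemma cechTr_mem (hP : ShiftStable u P) {t q : ℕ} (a : ℕ) {μ ν : ℤ} {w : Finset (Fin 4) → M}
    (hw : w ∈ cechC P t q μ ν) : cechTr (B := B) u a w ∈ cechC P (t + a) q μ ν := by
  intro J
  refine ⟨fun hJ => ?_, fun hJ => ?_⟩
  · have h := hP.prod_pow_smul_mem J a ((hw J).1 hJ)
    rw [hJ] at h
    rw [cechTr_apply]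
    convert h using 2 <;> push_cast <;> ring
  · rw [cechTr_apply, (hw J).2 hJ, smul_zero]

lemma cechC_comp {g : M →ₗ[A] N} (hg : ∀ μ ν x, x ∈ P μ ν → g x ∈ PN μ ν) {t q : ℕ} {μ ν : ℤ}
    {w : Finset (Fin 4) → M} (hw : w ∈ cechC P t q μ ν) : g ∘ w ∈ cechC PN t q μ ν :=
  fun J => ⟨fun hJ => hg _ _ _ ((hw J).1 hJ), fun hJ => by simp [(hw J).2 hJ]⟩

lemma cocyc_comp {g : M →ₗ[A] N} (hg : ∀ μ ν x, x ∈ P μ ν → g x ∈ PN μ ν) {t q : ℕ} {μ ν : ℤ}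
    {w : Finset (Fin 4) → M} (hw : w ∈ cocyc u P t q μ ν) : g ∘ w ∈ cocyc u PN t q μ ν := by
  refine ⟨cechC_comp hg hw.1, ?_⟩
  have h : cechD (B := B) u t w = 0 := hw.2
  rw [SetLike.mem_coe, LinearMap.mem_ker, cechD_comp, h]
  funext J
  simp

lemma cobd_comp {g : M →ₗ[A] N} (hg : ∀ μ ν x, x ∈ P μ ν → g x ∈ PN μ ν) {t q : ℕ} {μ ν : ℤ}
    {w : Finset (Fin 4) → M} (hw : w ∈ cobd u P t q μ ν) : g ∘ w ∈ cobd u PN t q μ ν := by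
  cases q with
  | zero =>
    have h : w = 0 := hw
    subst h
    show g ∘ (0 : Finset (Fin 4) → M) = 0
    funext J
    simp
  | succ q =>
    obtain ⟨v, hv, rfl⟩ := hw
    exact ⟨g ∘ v, cechC_comp hg hv, cechD_comp u g t v⟩

lemma cobd_le (hP : ShiftStable u P) (t q : ℕ) (μ ν : ℤ) :
    cobd u P t q μ ν ≤ cocyc u P t q μ ν := by
  cases q with
  | zero => exact bot_le
  | succ q =>
    rintro _ ⟨v, hv, rfl⟩
    exact ⟨cechD_mem hP hv, cechD_cechD u t v⟩

lemma cechTr_cobd (hP : ShiftStable u P) {t q : ℕ} (a : ℕ) {μ ν : ℤ} {w : Finset (Fin 4) → M}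
    (hw : w ∈ cobd u P t q μ ν) : cechTr (B := B) u a w ∈ cobd u P (t + a) q μ ν := by
  cases q with
  | zero =>
    have h : w = 0 := hw
    subst h
    rw [map_zero]
    exact zero_mem _
  | succ q =>
    obtain ⟨v, hv, rfl⟩ := hw
    exact ⟨_, cechTr_mem hP a hv, cechD_cechTr u t a v⟩

lemma cechTr_cocyc (hP : ShiftStable u P) {t q : ℕ} (a : ℕ) {μ ν : ℤ} {w : Finset (Fin 4) → M}
    (hw : w ∈ cocyc u P t q μ ν) : cechTr (B := B) u a w ∈ cocyc u P (t + a) q μ ν := by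
  refine ⟨cechTr_mem hP a hw.1, ?_⟩
  have h : cechD (B := B) u t w = 0 := hw.2
  rw [SetLike.mem_coe, LinearMap.mem_ker, cechD_cechTr, h, map_zero]

/-- a short exact sequence of modules compatible with the given pieces. -/
structure GrExact (i : L →ₗ[A] M) (g : M →ₗ[A] N) (PL : ℤ → ℤ → Submodule B L)
    (P : ℤ → ℤ → Submodule B M) (PN : ℤ → ℤ → Submodule B N) : Prop where
  inj : Function.Injective i
  exact : ∀ x, g x = 0 → ∃ a, i a = x
  zero : ∀ a, g (i a) = 0
  memL : ∀ μ ν a, a ∈ PL μ ν ↔ i a ∈ P μ ν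
  memN : ∀ μ ν c, c ∈ PN μ ν ↔ ∃ x ∈ P μ ν, g x = c

variable {i : L →ₗ[A] M} {g : M →ₗ[A] N}

lemma GrExact.map_mem (h : GrExact i g PL P PN) : ∀ μ ν x, x ∈ P μ ν → g x ∈ PN μ ν :=
  fun μ ν x hx => (h.memN μ ν _).2 ⟨x, hx, rfl⟩

lemma GrExact.lift_cochain (h : GrExact i g PL P PN) {t q : ℕ} {μ ν : ℤ} {w : Finset (Fin 4) → N}
    (hw : w ∈ cechC PN t q μ ν) : ∃ v ∈ cechC P t q μ ν, g ∘ v = w := by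
  have : ∀ J, ∃ x, (J.card = q → x ∈ P (μ + t * q) (ν + t * q)) ∧ (J.card ≠ q → x = 0) ∧
      g x = w J := by
    intro J
    by_cases hJ : J.card = q
    · obtain ⟨x, hx, hgx⟩ := (h.memN _ _ _).1 ((hw J).1 hJ)
      exact ⟨x, fun _ => hx, fun h' => absurd hJ h', hgx⟩
    · exact ⟨0, fun h' => absurd h' hJ, fun _ => rfl, by rw [(hw J).2 hJ, map_zero]⟩
  choose v h1 h2 h3 using this
  exact ⟨v, fun J => ⟨h1 J, h2 J⟩, funext h3⟩

lemma GrExact.lift_kernel (h : GrExact i g PL P PN) {t q : ℕ} {μ ν : ℤ} {w : Finset (Fin 4) → M}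
    (hw : w ∈ cechC P t q μ ν) (hgw : g ∘ w = 0) : ∃ v ∈ cechC PL t q μ ν, i ∘ v = w := by
  choose v hv using fun J => h.exact (w J) (congrFun hgw J)
  refine ⟨v, fun J => ⟨fun hJ => (h.memL _ _ _).2 ?_, fun hJ => h.inj ?_⟩, funext hv⟩
  · rw [hv]
    exact (hw J).1 hJ
  · rw [hv, map_zero]
    exact (hw J).2 hJ

lemma GrExact.lift_cocycle (h : GrExact i g PL P PN) {t q : ℕ} {μ ν : ℤ} {w : Finset (Fin 4) → M}
    (hw : w ∈ cocyc u P t q μ ν) (hgw : g ∘ w = 0) : ∃ v ∈ cocyc u PL t q μ ν, i ∘ v = w := by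
  obtain ⟨v, hv, rfl⟩ := h.lift_kernel hw.1 hgw
  refine ⟨v, ⟨hv, ?_⟩, rfl⟩
  have h0 : cechD (B := B) u t (i ∘ v) = 0 := hw.2
  rw [cechD_comp] at h0
  refine funext fun J => h.inj ?_
  simpa using congrFun h0 J

lemma GrExact.lift_cobd (h : GrExact i g PL P PN) {t q : ℕ} {μ ν : ℤ} {w : Finset (Fin 4) → N}
    (hw : w ∈ cobd u PN t q μ ν) : ∃ v ∈ cobd u P t q μ ν, g ∘ v = w := by
  cases q with
  | zero =>
    have h : w = 0 := hw
    subst h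
    exact ⟨0, zero_mem _, by funext J; simp⟩
  | succ q =>
    obtain ⟨c, hc, rfl⟩ := hw
    obtain ⟨v, hv, rfl⟩ := h.lift_cochain hc
    exact ⟨_, ⟨v, hv, rfl⟩, (cechD_comp u g t v).symm⟩

lemma comp_sub (g : M →ₗ[A] N) (v w : Finset (Fin 4) → M) : g ∘ (v - w) = g ∘ v - g ∘ w := by
  funext J
  simp

lemma GrExact.comp_eq_zero (h : GrExact i g PL P PN) (v : Finset (Fin 4) → L) :
    g ∘ (i ∘ v) = 0 := by
  funext J
  simp [h.zero]

lemma GrExact.vanish_right (h : GrExact i g PL P PN) (hP : ShiftStable u P) {q : ℕ} {μ ν : ℤ}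
    (hM : LCvanish u P q μ ν) (hL : LCvanish u PL (q + 1) μ ν) : LCvanish u PN q μ ν := by
  intro t w hw
  obtain ⟨v, hv, rfl⟩ := h.lift_cochain hw.1
  have hgv : g ∘ cechD (B := B) u t v = 0 := by
    rw [← cechD_comp]
    exact hw.2
  obtain ⟨z, hz, hzv⟩ := h.lift_cocycle ⟨cechD_mem hP hv, cechD_cechD u t v⟩ hgv
  obtain ⟨x, b, hb, hbz⟩ := hL t z hz
  have hc : cechTr (B := B) u x v - i ∘ b ∈ cocyc u P (t + x) q μ ν := by
    refine ⟨sub_mem (cechTr_mem hP x hv) (cechC_comp (fun μ ν a => (h.memL μ ν a).1) hb), ?_⟩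
    rw [SetLike.mem_coe, LinearMap.mem_ker, map_sub, cechD_cechTr, cechD_comp, hbz, ← cechTr_comp,
      hzv, sub_self]
  obtain ⟨y, hy⟩ := hM _ _ hc
  refine ⟨x + y, ?_⟩
  have h1 := cobd_comp h.map_mem hy
  rw [← cechTr_comp, comp_sub, h.comp_eq_zero, sub_zero, ← cechTr_comp, cechTr_add,
    add_assoc] at h1
  exact h1

lemma GrExact.vanish_mid (h : GrExact i g PL P PN) (hP : ShiftStable u P) {q : ℕ} {μ ν : ℤ}
    (hL : LCvanish u PL q μ ν) (hN : LCvanish u PN q μ ν) : LCvanish u P q μ ν := by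
  intro t w hw
  obtain ⟨x, hx⟩ := hN t _ (cocyc_comp h.map_mem hw)
  obtain ⟨v, hv, hgv⟩ := h.lift_cobd hx
  have hg0 : g ∘ (cechTr (B := B) u x w - v) = 0 := by
    rw [comp_sub, hgv, cechTr_comp, sub_self]
  obtain ⟨z, hz, hzw⟩ := h.lift_cocycle (sub_mem (cechTr_cocyc hP x hw) (cobd_le hP _ _ _ _ hv)) hg0
  obtain ⟨y, hy⟩ := hL _ _ hz
  refine ⟨x + y, ?_⟩
  have h1 := cobd_comp (fun μ ν a => (h.memL μ ν a).1) hy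
  rw [← cechTr_comp, hzw, map_sub] at h1
  have h2 := add_mem h1 (cechTr_cobd hP y hv)
  rwa [sub_add_cancel, cechTr_add, add_assoc] at h2

lemma GrExact.vanish_left (h : GrExact i g PL P PN) (hP : ShiftStable u P) {q : ℕ} {μ ν : ℤ}
    (hM : LCvanish u P (q + 1) μ ν) (hN : LCvanish u PN q μ ν) : LCvanish u PL (q + 1) μ ν := by
  intro t w hw
  obtain ⟨x, v, hv, hvw⟩ := hM t _ (cocyc_comp (fun μ ν a => (h.memL μ ν a).1) hw)
  have hc : g ∘ v ∈ cocyc u PN (t + x) q μ ν := by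
    refine ⟨cechC_comp h.map_mem hv, ?_⟩
    rw [SetLike.mem_coe, LinearMap.mem_ker, cechD_comp, hvw, cechTr_comp, h.comp_eq_zero]
  obtain ⟨y, hy⟩ := hN _ _ hc
  obtain ⟨v', hv', hgv⟩ := h.lift_cobd hy
  have hg0 : g ∘ (cechTr (B := B) u y v - v') = 0 := by
    rw [comp_sub, hgv, cechTr_comp, sub_self]
  have hv'c := cobd_le hP _ _ _ _ hv'
  obtain ⟨z, hz, hzv⟩ := h.lift_kernel (sub_mem (cechTr_mem hP y hv) hv'c.1) hg0
  refine ⟨x + y, z, by rwa [← add_assoc], ?_⟩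
  have h0 : cechD (B := B) u (t + x + y) v' = 0 := hv'c.2
  have h1 : i ∘ cechD (B := B) u (t + (x + y)) z = i ∘ cechTr (B := B) u (x + y) w := by
    rw [← cechD_comp, hzv, map_sub, ← add_assoc, h0, sub_zero, cechD_cechTr, hvw, cechTr_add,
      cechTr_comp]
  exact funext fun J => h.inj (congrFun h1 J)

lemma LCvanish.of_retract {g : M →ₗ[A] L} (hi : ∀ μ ν x, x ∈ PL μ ν → i x ∈ P μ ν)
    (hg : ∀ μ ν x, x ∈ P μ ν → g x ∈ PL μ ν) (hgi : ∀ x, g (i x) = x) {q : ℕ} {μ ν : ℤ}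
    (h : LCvanish u P q μ ν) : LCvanish u PL q μ ν := by
  intro t w hw
  obtain ⟨a, ha⟩ := h t _ (cocyc_comp hi hw)
  refine ⟨a, ?_⟩
  have h1 := cobd_comp hg ha
  rw [← cechTr_comp] at h1
  convert h1
  funext J
  simp [hgi]

end Cech

section Homotopy

variable {B : Type} [CommRing B] {A : Type} [CommRing A] [Algebra B A]
variable {M : Type} [AddCommGroup M] [Module A M] [Module B M] [IsScalarTower B A M]
variable (u : Fin 4 → A)

/-- the homotopy annihilating `uⱼ ^ t` on the Koszul cochain complex. -/
def cechH (A : Type) [CommRing A] [Module A M] (j : Fin 4) (w : Finset (Fin 4) → M) :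
    Finset (Fin 4) → M :=
  fun J => if j ∈ J then 0 else cechSign (A := A) J j • w (insert j J)

lemma cechSign_sq (J : Finset (Fin 4)) (j : Fin 4) :
    cechSign (A := A) J j * cechSign (A := A) J j = 1 := by
  rw [cechSign, ← pow_add, Even.neg_one_pow ⟨_, rfl⟩]

lemma cechSign_erase (J : Finset (Fin 4)) (j : Fin 4) :
    cechSign (A := A) (J.erase j) j = cechSign (A := A) J j := by
  unfold cechSign
  congr 2
  ext x
  simp only [Finset.mem_filter, Finset.mem_erase]
  constructor
  · rintro ⟨⟨_, h⟩, h'⟩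
    exact ⟨h, h'⟩
  · rintro ⟨h, h'⟩
    exact ⟨⟨h'.ne, h⟩, h'⟩

lemma cechSign_insert (J : Finset (Fin 4)) (j : Fin 4) :
    cechSign (A := A) (insert j J) j = cechSign (A := A) J j := by
  rw [← cechSign_erase (insert j J), Finset.erase_insert_eq_erase, cechSign_erase]

lemma cechH_homotopy (t : ℕ) (j : Fin 4) (w : Finset (Fin 4) → M) :
    cechD (B := B) u t (cechH A j w) + cechH A j (cechD (B := B) u t w) = u j ^ t • w := by
  funext J
  simp only [Pi.add_apply, Pi.smul_apply, cechD_apply]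
  by_cases hj : j ∈ J
  · rw [cechH, if_pos hj, add_zero, Finset.sum_eq_single_of_mem j hj]
    · simp only [cechH, Finset.notMem_erase, if_false, Finset.insert_erase hj, cechSign_erase,
        smul_smul]
      congr 1
      linear_combination (u j ^ t) * cechSign_sq (A := A) J j
    · intro l _ hlj
      rw [cechH, if_pos (Finset.mem_erase.2 ⟨hlj.symm, hj⟩), smul_zero]
  · rw [cechH, if_neg hj, cechD_apply, Finset.sum_insert hj, Finset.erase_insert hj, smul_add,
      cechSign_insert, smul_smul, Finset.smul_sum, add_left_comm, ← Finset.sum_add_distrib,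
      Finset.sum_eq_zero, add_zero]
    · congr 1
      linear_combination (u j ^ t) * cechSign_sq (A := A) J j
    · intro l hl
      have hlj : j ≠ l := fun h => hj (h ▸ hl)
      have hj' : j ∉ J.erase l := fun h => hj (Finset.mem_of_mem_erase h)
      have hs := cechSign_swap (A := A) (Finset.mem_insert_self j J)
        (Finset.mem_insert_of_mem hl) hlj
      rw [Finset.erase_insert hj, cechSign_insert, Finset.erase_insert_of_ne hlj,
        cechSign_insert] at hs
      simp only [cechH, if_neg hj', smul_smul, ← add_smul, Finset.erase_insert_of_ne hlj]
      have h1 : cechSign (A := A) J l * u l ^ t * cechSign (A := A) (J.erase l) j +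
          cechSign (A := A) J j * (cechSign (A := A) (insert j J) l * u l ^ t) = 0 := by
        have h2 : cechSign (A := A) (insert j J) l * cechSign (A := A) J l *
            (cechSign (A := A) J j * cechSign (A := A) J l +
            cechSign (A := A) (insert j J) l * cechSign (A := A) (J.erase l) j) = 0 := by
          rw [hs, mul_zero]
        linear_combination (u l ^ t) * h2 -
          (u l ^ t) * cechSign (A := A) (insert j J) l * cechSign (A := A) J j *
            cechSign_sq (A := A) J l -
          (u l ^ t) * cechSign (A := A) J l * cechSign (A := A) (J.erase l) j *
            cechSign_sq (A := A) (insert j J) l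
      rw [h1, zero_smul]

variable {u} {P : ℤ → ℤ → Submodule B M}

lemma cechH_mem {t q : ℕ} {μ ν : ℤ} {w : Finset (Fin 4) → M} (j : Fin 4)
    (hw : w ∈ cechC P t (q + 1) μ ν) (J : Finset (Fin 4)) :
    (J.card = q → cechH A j w J ∈ P (μ + t * (q + 1 : ℕ)) (ν + t * (q + 1 : ℕ))) ∧
      (J.card ≠ q → cechH A j w J = 0) := by
  unfold cechH
  split_ifs with hj
  · simp
  · have hc := Finset.card_insert_of_notMem hj
    exact ⟨fun hJ => sign_smul_mem _ _ _ ((hw _).1 (by rw [hc, hJ])),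
      fun hJ => by rw [(hw _).2 (by rw [hc]; omega), smul_zero]⟩

lemma cocyc_pow_smul {t q : ℕ} {μ ν : ℤ} {w : Finset (Fin 4) → M} (hw : w ∈ cocyc u P t q μ ν)
    (j : Fin 4) : cechD (B := B) u t (cechH A j w) = u j ^ t • w := by
  have h0 : cechD (B := B) u t w = 0 := hw.2
  rw [← cechH_homotopy (B := B) u t j w, h0]
  have : cechH A j (0 : Finset (Fin 4) → M) = 0 := by
    funext J
    simp [cechH]
  rw [this, add_zero]

lemma LCvanish_zero_of_torsionFree (j : Fin 4) (h : ∀ (t : ℕ) (x : M), u j ^ t • x = 0 → x = 0)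
    (μ ν : ℤ) : LCvanish u P 0 μ ν := by
  intro t w hw
  refine ⟨0, ?_⟩
  have h1 := cocyc_pow_smul hw j
  have h2 : cechH A j w = 0 := by
    funext J
    simp only [cechH, Pi.zero_apply]
    split_ifs with hj
    · rfl
    · rw [(hw.1 _).2, smul_zero]
      rw [Finset.card_insert_of_notMem hj]
      omega
  rw [h2, map_zero] at h1
  have h3 : w = 0 := funext fun J => h t _ (congrFun h1 J).symm
  rw [h3, map_zero]
  exact zero_mem _

end Homotopy

section Graded

variable {k}

lemma Rpiece_mul {a b c d : ℤ} {x y : RR k} (hx : x ∈ Rpiece k a b) (hy : y ∈ Rpiece k c d) :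
    x * y ∈ Rpiece k (a + c) (b + d) :=
  IsWeightedHomogeneous.mul hx hy

lemma Rpiece_pow {a b : ℤ} {x : RR k} (hx : x ∈ Rpiece k a b) (t : ℕ) :
    x ^ t ∈ Rpiece k (t * a) (t * b) := by
  have := IsWeightedHomogeneous.pow hx t
  simpa [Rpiece] using this

lemma uR_mem (j : Fin 4) : uR k j ∈ Rpiece k 1 1 := by
  have h := (isWeightedHomogeneous_X k stw (⟨(j : ℕ) / 2, by omega⟩ : Fin 4)).mul
    (isWeightedHomogeneous_X k stw (⟨2 + (j : ℕ) % 2, by omega⟩ : Fin 4))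
  have h1 : (j : ℕ) / 2 ≤ 1 := by omega
  have h2 : ¬ (2 + (j : ℕ) % 2 ≤ 1) := by omega
  simpa [stw, h1, h2, Rpiece, uR] using h

/-- the component of bidegree `(a,b)` of a polynomial. -/
abbrev Rcomp (a b : ℤ) : RR k →ₗ[k] RR k := weightedHomogeneousComponent stw (a, b)

lemma Rcomp_mem (a b : ℤ) (x : RR k) : Rcomp a b x ∈ Rpiece k a b :=
  weightedHomogeneousComponent_mem _ _ _

lemma Rcomp_eq_self {a b : ℤ} {x : RR k} (hx : x ∈ Rpiece k a b) : Rcomp a b x = x :=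
  IsWeightedHomogeneous.weightedHomogeneousComponent_same hx

lemma Rcomp_mul {a b c d : ℤ} (x : RR k) {y : RR k} (hy : y ∈ Rpiece k c d) :
    Rcomp a b (x * y) = Rcomp (a - c) (b - d) x * y := by
  let := weightedGradedAlgebra k stw
  have h := DirectSum.coe_decompose_mul_add_of_right_mem (weightedHomogeneousSubmodule k stw)
    (i := (a - c, b - d)) (a := x) hy
  rw [Prod.mk_add_mk, sub_add_cancel, sub_add_cancel] at h
  have e : ∀ (z : RR k) (i : ℤ × ℤ),
      (DirectSum.decompose (weightedHomogeneousSubmodule k stw) z i : RR k) =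
        weightedHomogeneousComponent stw i z :=
    fun z i => weightedDecomposition.decompose'_apply k stw z i
  rwa [e, e] at h

lemma exists_homogeneous_coeff {ι : Type} [Fintype ι] {a b : ℤ} {x : RR k}
    (hx : x ∈ Rpiece k a b) {c d : ι → ℤ} {y e : ι → RR k} (hy : ∀ i, y i ∈ Rpiece k (c i) (d i))
    (h : x = ∑ i, e i * y i) :
    ∃ e' : ι → RR k, (∀ i, e' i ∈ Rpiece k (a - c i) (b - d i)) ∧ x = ∑ i, e' i * y i := by
  refine ⟨fun i => Rcomp (a - c i) (b - d i) (e i), fun i => Rcomp_mem _ _ _, ?_⟩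
  rw [← Rcomp_eq_self hx, h, map_sum]
  exact Finset.sum_congr rfl fun i _ => Rcomp_mul _ (hy i)

variable {M : Type} [AddCommGroup M] [Module (RR k) M] [Module k M] [IsScalarTower k (RR k) M]

/-- the pieces `P` are compatible with the bigrading of `R`. -/
def GrStable (P : ℤ → ℤ → Submodule k M) : Prop :=
  ∀ a b μ ν r x, r ∈ Rpiece k a b → x ∈ P μ ν → r • x ∈ P (μ + a) (ν + b)

variable {P : ℤ → ℤ → Submodule k M}

lemma GrStable.shiftStable (hP : GrStable P) : ShiftStable (uR k) P :=
  fun j _ _ _ hx => hP _ _ _ _ _ _ (uR_mem j) hx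

lemma uR_zero_mul_three : uR k 0 * uR k 3 = uR k 1 * uR k 2 := by
  simp [uR]
  ring

lemma LCvanish_four (hP : GrStable P) (μ ν : ℤ) : LCvanish (uR k) P 4 μ ν := by
  intro t w hw
  refine ⟨t, ?_⟩
  have hv : (Pi.single (Finset.univ.erase 0) (uR k 3 ^ (2 * t) • w Finset.univ) :
      Finset (Fin 4) → M) ∈ cechC P (t + t) 3 μ ν := by
    intro J
    by_cases hJ : J = Finset.univ.erase 0
    · subst hJ
      rw [Pi.single_eq_same]
      refine ⟨fun _ => ?_, fun h => absurd (by decide) h⟩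
      have := hP.shiftStable.pow_smul_mem 3 (2 * t) ((hw.1 Finset.univ).1 (by decide))
      convert this using 2 <;> push_cast <;> ring
    · rw [Pi.single_eq_of_ne hJ]
      exact ⟨fun _ => zero_mem _, fun _ => rfl⟩
  refine ⟨_, hv, ?_⟩
  funext J
  by_cases hJ : J = Finset.univ
  · subst hJ
    rw [cechD_apply, cechTr_apply, Finset.sum_eq_single_of_mem 0 (Finset.mem_univ _)]
    · rw [Pi.single_eq_same, smul_smul]
      congr 1
      have h1 : cechSign (A := RR k) Finset.univ 0 = 1 := by simp [cechSign]
      have h2 : ∏ j, uR k j = (uR k 0 * uR k 3) ^ 2 := by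
        rw [Fin.prod_univ_four]
        linear_combination (-uR k 0 * uR k 3) * uR_zero_mul_three (k := k)
      rw [h1, h2]
      ring
    · intro l _ hl
      rw [Pi.single_eq_of_ne, smul_zero]
      intro h
      have : l ∈ (Finset.univ : Finset (Fin 4)).erase l := h ▸ by simp [hl]
      simp at this
  · have hc : J.card ≠ 4 := fun h => hJ (Finset.card_eq_iff_eq_univ J |>.1 (by simpa using h))
    rw [(cechD_mem hP.shiftStable hv J).2 hc, (cechTr_mem hP.shiftStable t hw.1 J).2 hc]

lemma LCvanish_of_principal (hP : GrStable P) {l : RR k} (hl : l ∈ Rpiece k 1 1)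
    (hlu : l ∈ Ideal.span (Set.range (uR k))) {N : ℕ} {c : Fin 4 → RR k}
    (hc : ∀ j, c j ∈ Rpiece k (N - 1) (N - 1))
    (hcl : ∀ j (x : M), uR k j ^ N • x = (c j * l) • x) {q : ℕ} (μ ν : ℤ) :
    LCvanish (uR k) P (q + 2) μ ν := by
  intro t w hw
  -- a power of `l` lies in the ideal of the `t`-th powers
  obtain ⟨T, hT⟩ : ∃ T, l ^ T ∈ Ideal.span (Set.range fun j => uR k j ^ t) := by
    refine Ideal.mem_radical_iff.1 (Ideal.span_le.2 ?_ hlu)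
    rintro _ ⟨j, rfl⟩
    exact Ideal.mem_radical_iff.2 ⟨t, Ideal.subset_span ⟨j, rfl⟩⟩
  obtain ⟨e₀, he₀⟩ := (Ideal.mem_span_range_iff_exists_fun).1 hT
  obtain ⟨e, he, hle⟩ := exists_homogeneous_coeff (Rpiece_pow hl T)
    (fun j => Rpiece_pow (uR_mem (k := k) j) t) he₀.symm
  have hdiv : ∀ J : Finset (Fin 4), J.Nonempty → ∃ r ∈ Rpiece k (N * T * J.card - T)
      (N * T * J.card - T), ∀ x : M, (∏ j ∈ J, uR k j) ^ (N * T) • x = (r * l ^ T) • x := by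
    rintro J ⟨j, hj⟩
    have hpow : ∀ n (x : M), (uR k j ^ N) ^ n • x = (c j * l) ^ n • x := by
      intro n
      induction n with
      | zero => simp
      | succ n ih =>
        intro x
        rw [pow_succ, mul_smul, hcl, ih, smul_smul, pow_succ]
    have hprod : (∏ i ∈ J.erase j, uR k i) ∈ Rpiece k (J.card - 1) (J.card - 1) := by
      have := IsWeightedHomogeneous.prod (J.erase j) (uR k) (fun _ => ((1 : ℤ), (1 : ℤ)))
        (w := stw) fun i _ => uR_mem i
      have h2 := Finset.card_erase_add_one hj
      have h3 : (J.card : ℤ) - 1 = (J.erase j).card := by omega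
      rw [h3]
      simpa [Rpiece] using this
    refine ⟨(∏ i ∈ J.erase j, uR k i) ^ (N * T) * c j ^ T, ?_, fun x => ?_⟩
    · have := Rpiece_mul (Rpiece_pow hprod (N * T)) (Rpiece_pow (hc j) T)
      convert this using 2 <;> push_cast <;> ring
    · rw [← Finset.mul_prod_erase J _ hj, mul_pow, mul_comm, mul_smul, pow_mul (uR k j), hpow,
        smul_smul]
      ring_nf
  -- `l ^ T • w` is a coboundary
  set v : Finset (Fin 4) → M := ∑ j, e j • cechH (RR k) j w with hv
  have hdv : cechD (B := k) (uR k) t v = l ^ T • w := by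
    rw [hv, map_sum, hle, Finset.sum_smul]
    refine Finset.sum_congr rfl fun j _ => ?_
    rw [cechD_smul, cocyc_pow_smul hw, smul_smul]
  have hvmem : ∀ J, (J.card = q + 1 → v J ∈ P (μ + t * (q + 1) + T) (ν + t * (q + 1) + T)) ∧
      (J.card ≠ q + 1 → v J = 0) := by
    intro J
    rw [hv, Finset.sum_apply]
    refine ⟨fun hJ => Submodule.sum_mem _ fun j _ => ?_, fun hJ => Finset.sum_eq_zero fun j _ => ?_⟩
    · rw [Pi.smul_apply]
      have := hP _ _ _ _ _ _ (he j) ((cechH_mem (A := RR k) j hw.1 J).1 hJ)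
      convert this using 2 <;> push_cast <;> ring
    · rw [Pi.smul_apply, (cechH_mem (A := RR k) j hw.1 J).2 hJ, smul_zero]
  choose! r hr hrl using hdiv
  set v' : Finset (Fin 4) → M := fun J => r J • v J with hv'
  have hv'mem : v' ∈ cechC P (t + N * T) (q + 1) μ ν := by
    intro J
    refine ⟨fun hJ => ?_, fun hJ => ?_⟩
    · have := hP _ _ _ _ _ _ (hr J (Finset.card_pos.1 (by omega))) ((hvmem J).1 hJ)
      rw [hJ] at this
      convert this using 2 <;> push_cast <;> ring
    · rw [hv']
      simp only [(hvmem J).2 hJ, smul_zero]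
  have htr : cechTr (B := k) (uR k) (N * T) v = l ^ T • v' := by
    funext J
    rw [cechTr_apply, Pi.smul_apply, hv']
    by_cases hJ : J.Nonempty
    · rw [hrl J hJ, mul_comm, mul_smul]
    · have hJ0 : J.card ≠ q + 1 := by
        rw [Finset.not_nonempty_iff_eq_empty.1 hJ]
        simp
      simp only [(hvmem J).2 hJ0, smul_zero]
  have hkill : l ^ T • (cechTr (B := k) (uR k) (N * T) w -
      cechD (B := k) (uR k) (t + N * T) v') = 0 := by
    rw [smul_sub, ← cechTr_smul, ← hdv, ← cechD_smul, ← htr, cechD_cechTr, sub_self]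
  refine ⟨N * T + N * T, cechTr (B := k) (uR k) (N * T) v', ?_, ?_⟩
  · have := cechTr_mem hP.shiftStable (N * T) hv'mem
    rwa [add_assoc] at this
  · rw [← add_assoc, cechD_cechTr, ← cechTr_add, ← sub_eq_zero, ← map_sub, ← neg_sub, map_neg,
      neg_eq_zero]
    funext J
    rw [cechTr_apply, Pi.zero_apply]
    by_cases hJ : J.Nonempty
    · rw [hrl J hJ, mul_smul]
      have := congrFun hkill J
      rw [Pi.smul_apply, Pi.zero_apply] at this
      rw [this, smul_zero]
    · rw [Finset.not_nonempty_iff_eq_empty.1 hJ, Pi.sub_apply, cechTr_apply, (hw.1 ∅).2 (by simp),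
        cechD_apply]
      simp

end Graded

section Tensors

variable {k}

lemma uR_ne_zero (j : Fin 4) : uR k j ≠ 0 :=
  mul_ne_zero (X_ne_zero _) (X_ne_zero _)

lemma isRelPrime_uR (t : ℕ) : IsRelPrime (uR k 0 ^ t) (uR k 3 ^ t) := by
  have hX : ∀ i j : Fin 4, i ≠ j → IsRelPrime (X i : RR k) (X j) := fun i j hij =>
    (X_prime (i := i)).irreducible.isRelPrime_iff_not_dvd.2 fun h => hij ((X_dvd_X).1 h)
  have h : IsRelPrime (uR k 0) (uR k 3) :=
    ((hX _ _ (by decide)).mul_right (hX _ _ (by decide))).mul_left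
      ((hX _ _ (by decide)).mul_right (hX _ _ (by decide)))
  exact h.pow

lemma mem_KP {m n p : ℕ} {μ ν : ℤ} {W : (Fin p → Fin 4) → RR k} :
    W ∈ KP k m n p μ ν ↔ ∀ a, W a ∈ Rpiece k (μ - p * m) (ν - p * n) := by
  simp [KP, Submodule.mem_iInf]

lemma KP_grStable (m n p : ℕ) : GrStable (KP k m n p) := by
  intro a b μ ν r x hr hx
  rw [mem_KP] at hx ⊢
  intro c
  have := Rpiece_mul hr (hx c)
  rw [Pi.smul_apply, smul_eq_mul]
  convert this using 2 <;> ring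

lemma LCvanish_one_KP (m n p : ℕ) (μ ν : ℤ) : LCvanish (uR k) (KP k m n p) 1 μ ν := by
  intro t w hw
  refine ⟨0, ?_⟩
  have h0 := cocyc_pow_smul hw 0
  have hH : ∀ J, J ≠ ∅ → cechH (RR k) 0 w J = 0 := fun J hJ =>
    (cechH_mem (A := RR k) 0 hw.1 J).2 (by simpa using hJ)
  have hH0 : cechH (RR k) 0 w ∅ = w {0} := by simp [cechH, cechSign]
  have hdvd : ∀ a, uR k 0 ^ t ∣ w {0} a := by
    intro a
    have h3 := congrFun (congrFun h0 {3}) a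
    rw [cechD_apply, Finset.sum_singleton, Finset.erase_singleton, hH0] at h3
    simp only [cechSign, Pi.smul_apply, smul_eq_mul] at h3
    have h4 : ((({3} : Finset (Fin 4)).filter (· < 3)).card) = 0 := by decide
    rw [h4, pow_zero, one_mul] at h3
    exact (isRelPrime_uR t).dvd_of_dvd_mul_left ⟨_, h3⟩
  have hex : ∀ a, ∃ e ∈ Rpiece k (μ - p * m) (ν - p * n), w {0} a = uR k 0 ^ t * e := by
    intro a
    obtain ⟨e, he⟩ := hdvd a
    obtain ⟨e', he', h'⟩ := exists_homogeneous_coeff (ι := Unit) (e := fun _ => e)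
      (mem_KP.1 ((hw.1 {0}).1 (by simp)) a) (fun _ => Rpiece_pow (uR_mem 0) t)
      (by simpa [mul_comm] using he)
    refine ⟨e' (), ?_, by simpa [mul_comm] using h'⟩
    convert he' () using 1
    push_cast
    congr 1 <;> ring
  choose e he hwe using hex
  have hv : (Pi.single ∅ e : Finset (Fin 4) → (Fin p → Fin 4) → RR k) ∈
      cechC (KP k m n p) (t + 0) 0 μ ν := by
    intro J
    by_cases hJ : J = ∅
    · subst hJ
      refine ⟨fun _ => ?_, fun h => absurd rfl h⟩
      rw [Pi.single_eq_same, mem_KP]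
      simpa using he
    · rw [Pi.single_eq_of_ne hJ]
      exact ⟨fun _ => zero_mem _, fun _ => rfl⟩
  refine ⟨_, hv, ?_⟩
  have h1 : uR k 0 ^ t • (Pi.single ∅ e : Finset (Fin 4) → (Fin p → Fin 4) → RR k) =
      cechH (RR k) 0 w := by
    funext J
    by_cases hJ : J = ∅
    · subst hJ
      rw [hH0, Pi.smul_apply, Pi.single_eq_same]
      funext a
      rw [hwe]
      rfl
    · rw [hH J hJ, Pi.smul_apply, Pi.single_eq_of_ne hJ, smul_zero]
  have h2 : cechTr (B := k) (uR k) 0 w = w := by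
    funext J
    simp [cechTr_apply]
  rw [h2, add_zero]
  have h3 : uR k 0 ^ t • cechD (B := k) (uR k) t (Pi.single ∅ e) = uR k 0 ^ t • w := by
    rw [← cechD_smul, h1, h0]
  funext J a
  exact mul_left_cancel₀ (pow_ne_zero t (uR_ne_zero 0)) (congrFun (congrFun h3 J) a)

lemma AltT.comp_perm {p : ℕ} {W : (Fin p → Fin 4) → RR k} (hW : W ∈ AltT k p)
    (a : Fin p → Fin 4) (σ : Equiv.Perm (Fin p)) :
    W (a ∘ σ) = ((Equiv.Perm.sign σ : ℤ) : RR k) * W a := by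
  induction σ using Equiv.Perm.swap_induction_on generalizing a with
  | one => simp
  | swap_mul σ x y hxy ih =>
    rw [Equiv.Perm.coe_mul, ← Function.comp_assoc, ih, (hW a x y hxy).2,
      Equiv.Perm.sign_mul, Equiv.Perm.sign_swap hxy]
    push_cast
    ring

lemma AltT.eq_zero {p : ℕ} {W : (Fin p → Fin 4) → RR k} (hW : W ∈ AltT k p)
    {a : Fin p → Fin 4} (ha : ¬ Function.Injective a) : W a = 0 := by
  simp only [Function.Injective, not_forall] at ha
  obtain ⟨x, y, hxy, hne⟩ := ha
  exact (hW a x y hne).1 hxy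

/-- the alternating tensor with the same values as a given tensor on increasing tuples. -/
def alternize (p : ℕ) : ((Fin p → Fin 4) → RR k) →ₗ[RR k] ((Fin p → Fin 4) → RR k) where
  toFun W a := open Classical in if Function.Injective a then
    ((Equiv.Perm.sign (Tuple.sort a) : ℤ) : RR k) * W (a ∘ Tuple.sort a) else 0
  map_add' W W' := by
    funext a
    simp only [Pi.add_apply]
    split_ifs <;> ring
  map_smul' c W := by
    funext a
    simp only [Pi.smul_apply, smul_eq_mul, RingHom.id_apply]
    split_ifs <;> ring

lemma alternize_apply {p : ℕ} (W : (Fin p → Fin 4) → RR k) {a : Fin p → Fin 4}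
    (ha : Function.Injective a) :
    alternize p W a = ((Equiv.Perm.sign (Tuple.sort a) : ℤ) : RR k) * W (a ∘ Tuple.sort a) :=
  if_pos ha

lemma alternize_apply_of_not {p : ℕ} (W : (Fin p → Fin 4) → RR k) {a : Fin p → Fin 4}
    (ha : ¬ Function.Injective a) : alternize p W a = 0 :=
  if_neg ha

lemma alternize_mem {p : ℕ} (W : (Fin p → Fin 4) → RR k) : alternize p W ∈ AltT k p := by
  intro a i j hij
  refine ⟨fun h => alternize_apply_of_not W fun ha => hij (ha h), ?_⟩
  by_cases ha : Function.Injective a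
  · rw [alternize_apply W ha, alternize_apply W (ha.comp (Equiv.injective _)),
      Tuple.comp_perm_comp_sort_eq_comp_sort]
    have h : Equiv.swap i j * Tuple.sort (a ∘ Equiv.swap i j) = Tuple.sort a :=
      Equiv.ext fun x => ha
        (congrFun (Tuple.comp_perm_comp_sort_eq_comp_sort (f := a) (σ := Equiv.swap i j)) x)
    rw [← h, Equiv.Perm.sign_mul, Equiv.Perm.sign_swap hij]
    push_cast
    ring
  · rw [alternize_apply_of_not W ha, alternize_apply_of_not W, neg_zero]
    rwa [Equiv.injective_comp]

lemma alternize_eq_self {p : ℕ} {W : (Fin p → Fin 4) → RR k} (hW : W ∈ AltT k p) :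
    alternize p W = W := by
  funext a
  by_cases ha : Function.Injective a
  · rw [alternize_apply W ha, AltT.comp_perm hW, ← mul_assoc, ← Int.cast_mul, ← Units.val_mul,
      Int.units_mul_self]
    simp
  · rw [alternize_apply_of_not W ha, AltT.eq_zero hW ha]

lemma alternize_mem_KP {m n p : ℕ} {μ ν : ℤ} {W : (Fin p → Fin 4) → RR k}
    (hW : W ∈ KP k m n p μ ν) : alternize p W ∈ KP k m n p μ ν := by
  rw [mem_KP] at hW ⊢
  intro a
  by_cases ha : Function.Injective a
  · rw [alternize_apply W ha]
    rcases Int.units_eq_one_or (Equiv.Perm.sign (Tuple.sort a)) with h | h <;> simp [h, hW]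
  · rw [alternize_apply_of_not W ha]
    exact zero_mem _

lemma AltT.ext_strictMono {p : ℕ} {W W' : (Fin p → Fin 4) → RR k} (hW : W ∈ AltT k p)
    (hW' : W' ∈ AltT k p) (h : ∀ a, StrictMono a → W a = W' a) : W = W' := by
  rw [← alternize_eq_self hW, ← alternize_eq_self hW']
  funext a
  by_cases ha : Function.Injective a
  · rw [alternize_apply W ha, alternize_apply W' ha,
      h _ ((Tuple.monotone_sort a).strictMono_of_injective (ha.comp (Equiv.injective _)))]
  · rw [alternize_apply_of_not W ha, alternize_apply_of_not W' ha]

/-- the bidegree-`(μ,ν)` piece of a submodule of the `p`-tensors. -/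
def subPiece (m n : ℕ) {p : ℕ} (Q : Submodule (RR k) ((Fin p → Fin 4) → RR k)) (μ ν : ℤ) :
    Submodule k ↥Q :=
  Submodule.comap ((Q.subtype).restrictScalars k) (KP k m n p μ ν)

lemma mem_subPiece {m n p : ℕ} {Q : Submodule (RR k) ((Fin p → Fin 4) → RR k)} {μ ν : ℤ} {x : Q} :
    x ∈ subPiece m n Q μ ν ↔ (x : (Fin p → Fin 4) → RR k) ∈ KP k m n p μ ν := Iff.rfl

lemma subPiece_grStable (m n : ℕ) {p : ℕ} (Q : Submodule (RR k) ((Fin p → Fin 4) → RR k)) :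
    GrStable (subPiece m n Q) :=
  fun a b μ ν r x hr hx => KP_grStable m n p a b μ ν r x hr hx

lemma LCvanish_zero_subPiece (m n : ℕ) {p : ℕ} (Q : Submodule (RR k) ((Fin p → Fin 4) → RR k))
    (μ ν : ℤ) : LCvanish (uR k) (subPiece m n Q) 0 μ ν := by
  refine LCvanish_zero_of_torsionFree 0 (fun t x hx => ?_) μ ν
  refine Subtype.ext (funext fun a => ?_)
  have h := congrFun (congrArg Subtype.val hx) a
  exact (mul_eq_zero.1 h).resolve_left (pow_ne_zero t (uR_ne_zero 0))

lemma LCvanish_AltT {m n p q : ℕ} {μ ν : ℤ} (h : LCvanish (uR k) (KP k m n p) q μ ν) :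
    LCvanish (uR k) (subPiece m n (AltT k p)) q μ ν :=
  LCvanish.of_retract (i := (AltT k p).subtype)
    (g := (alternize p).codRestrict (AltT k p) alternize_mem) (fun _ _ _ hx => hx)
    (fun _ _ _ hx => alternize_mem_KP hx) (fun x => Subtype.ext (alternize_eq_self x.2)) h

end Tensors

section Koszul

variable {k f}

lemma cons_comp_swap {p : ℕ} (i : Fin 4) (a : Fin p → Fin 4) (x y : Fin p) :
    (Fin.cons i (a ∘ Equiv.swap x y) : Fin (p + 1) → Fin 4) =
      (Fin.cons i a : Fin (p + 1) → Fin 4) ∘ Equiv.swap x.succ y.succ := by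
  funext z
  refine Fin.cases ?_ (fun z => ?_) z
  · simp [Equiv.swap_apply_of_ne_of_ne (Fin.succ_ne_zero x).symm (Fin.succ_ne_zero y).symm]
  · simp only [Fin.cons_succ, Function.comp_apply]
    rw [← (Fin.succ_injective p).map_swap]
    simp

lemma DK_apply (p : ℕ) (W : (Fin (p + 1) → Fin 4) → RR k) (a : Fin p → Fin 4) :
    DK k f p W a = ∑ i, W (Fin.cons i a) * f i := rfl

lemma DK_mem_AltT {p : ℕ} {W : (Fin (p + 1) → Fin 4) → RR k} (hW : W ∈ AltT k (p + 1)) :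
    DK k f p W ∈ AltT k p := by
  intro a x y hxy
  have hxy' : x.succ ≠ y.succ := fun h => hxy (Fin.succ_injective p h)
  refine ⟨fun h => ?_, ?_⟩
  · rw [DK_apply]
    refine Finset.sum_eq_zero fun i _ => ?_
    rw [(hW (Fin.cons i a) x.succ y.succ hxy').1 (by simpa using h), zero_mul]
  · rw [DK_apply, DK_apply, ← Finset.sum_neg_distrib]
    refine Finset.sum_congr rfl fun i _ => ?_
    rw [cons_comp_swap, (hW (Fin.cons i a) x.succ y.succ hxy').2, neg_mul]

lemma cons_cons_swap {p : ℕ} (i j : Fin 4) (a : Fin p → Fin 4) :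
    (Fin.cons i (Fin.cons j a : Fin (p + 1) → Fin 4) : Fin (p + 1 + 1) → Fin 4) ∘
      Equiv.swap 0 1 = Fin.cons j (Fin.cons i a : Fin (p + 1) → Fin 4) := by
  funext z
  refine Fin.cases ?_ (fun z => Fin.cases ?_ (fun z => ?_) z) z
  · simp
  · simp
  · rw [Function.comp_apply, Equiv.swap_apply_of_ne_of_ne (by simp)
      (by simp [Fin.ext_iff])]
    simp

lemma DK_DK {p : ℕ} {W : (Fin (p + 1 + 1) → Fin 4) → RR k} (hW : W ∈ AltT k (p + 1 + 1)) :
    DK k f p (DK k f (p + 1) W) = 0 := by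
  funext a
  simp only [DK_apply, Pi.zero_apply]
  have h0 : ∀ i, W (Fin.cons i (Fin.cons i a : Fin (p + 1) → Fin 4)) = 0 := fun i =>
    (hW _ 0 1 (by simp)).1 (by simp)
  have h1 : ∀ i j, W (Fin.cons i (Fin.cons j a : Fin (p + 1) → Fin 4)) =
      -W (Fin.cons j (Fin.cons i a : Fin (p + 1) → Fin 4)) := fun i j => by
    rw [← cons_cons_swap j i, (hW _ 0 1 (by simp)).2]
  simp only [Fin.sum_univ_four, h0]
  rw [h1 1 0, h1 2 0, h1 3 0, h1 2 1, h1 3 1, h1 3 2]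
  ring

lemma ZK_le_AltT (p : ℕ) : ZK k f p ≤ AltT k p := by
  cases p with
  | zero => exact le_rfl
  | succ p => exact inf_le_left

lemma BK_le_ZK (p : ℕ) : BK k f p ≤ ZK k f p := by
  rintro _ ⟨W, hW, rfl⟩
  cases p with
  | zero => exact DK_mem_AltT hW
  | succ p => exact ⟨DK_mem_AltT hW, DK_DK hW⟩

lemma DK_mem_KP {m n p : ℕ} (hf : ∀ i, f i ∈ Rpiece k m n) {μ ν : ℤ}
    {W : (Fin (p + 1) → Fin 4) → RR k} (hW : W ∈ KP k m n (p + 1) μ ν) :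
    DK k f p W ∈ KP k m n p μ ν := by
  rw [mem_KP] at hW ⊢
  intro a
  rw [DK_apply]
  refine Submodule.sum_mem _ fun i _ => ?_
  have := Rpiece_mul (hW (Fin.cons i a)) (hf i)
  convert this using 2 <;> push_cast <;> ring

lemma exists_homogeneous_preimage {m n p : ℕ} (hf : ∀ i, f i ∈ Rpiece k m n) {μ ν : ℤ}
    {W : (Fin (p + 1) → Fin 4) → RR k} (hW : W ∈ AltT k (p + 1))
    (hD : DK k f p W ∈ KP k m n p μ ν) :
    ∃ V ∈ AltT k (p + 1), V ∈ KP k m n (p + 1) μ ν ∧ DK k f p V = DK k f p W := by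
  refine ⟨fun a => Rcomp (μ - (p + 1 : ℕ) * m) (ν - (p + 1 : ℕ) * n) (W a), ?_, ?_, ?_⟩
  · intro a i j hij
    refine ⟨fun h => ?_, ?_⟩
    · simp only [(hW a i j hij).1 h, map_zero]
    · simp only [(hW a i j hij).2, map_neg]
  · exact mem_KP.2 fun a => Rcomp_mem _ _ _
  · funext a
    rw [← Rcomp_eq_self (mem_KP.1 hD a), DK_apply, DK_apply, map_sum]
    refine Finset.sum_congr rfl fun i _ => ?_
    rw [Rcomp_mul _ (hf i)]
    congr 3 <;> push_cast <;> ring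

/-- the boundaries as a submodule of the cycles. -/
abbrev BZ (f : Fin 4 → RR k) (p : ℕ) : Submodule (RR k) ↥(ZK k f p) :=
  Submodule.comap (ZK k f p).subtype (BK k f p)

lemma grExact_ZK_AltT_BK {m n : ℕ} (hf : ∀ i, f i ∈ Rpiece k m n) (p : ℕ) :
    GrExact (Submodule.inclusion (ZK_le_AltT (f := f) (p + 1)))
      ((DK k f p).restrict (p := AltT k (p + 1)) (q := BK k f p) fun _ hW => ⟨_, hW, rfl⟩)
      (subPiece m n (ZK k f (p + 1))) (subPiece m n (AltT k (p + 1)))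
      (subPiece m n (BK k f p)) where
  inj := Submodule.inclusion_injective _
  exact x hx := ⟨⟨x.1, x.2, congrArg Subtype.val hx⟩, rfl⟩
  zero a := Subtype.ext a.2.2
  memL _ _ _ := Iff.rfl
  memN μ ν c := by
    constructor
    · intro hc
      obtain ⟨W, hW, hWc⟩ := c.2
      rw [mem_subPiece, ← hWc] at hc
      obtain ⟨V, hV, hVK, hVW⟩ := exists_homogeneous_preimage hf hW hc
      exact ⟨⟨V, hV⟩, hVK, Subtype.ext (hVW.trans hWc)⟩
    · rintro ⟨x, hx, rfl⟩
      exact DK_mem_KP hf hx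

/-- the homology class of a cycle. -/
def mkHK (f : Fin 4 → RR k) (p : ℕ) : ↥(ZK k f p) →ₗ[RR k] HK k f p := (BZ f p).mkQ

lemma grExact_BK_ZK_HK (m n p : ℕ) :
    GrExact (Submodule.inclusion (BK_le_ZK (f := f) p)) (mkHK f p)
      (subPiece m n (BK k f p)) (subPiece m n (ZK k f p)) (PH k f m n p) where
  inj := Submodule.inclusion_injective _
  exact x hx := ⟨⟨x.1, (Submodule.Quotient.mk_eq_zero (BZ f p)).1 hx⟩, rfl⟩
  zero a := (Submodule.Quotient.mk_eq_zero (BZ f p)).2 a.2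
  memL _ _ _ := Iff.rfl
  memN _ _ _ := Iff.rfl

lemma PH_grStable (m n p : ℕ) : GrStable (PH k f m n p) := by
  rintro a b μ ν r _ hr ⟨x, hx, rfl⟩
  exact ⟨r • x, subPiece_grStable m n _ a b μ ν r x hr hx, rfl⟩

end Koszul

section Wedge

variable {k f}

/-- the exterior product of the `i`-th basis vector with an alternating tensor. -/
def wedge {p : ℕ} (i : Fin 4) (z : (Fin p → Fin 4) → RR k) : (Fin (p + 1) → Fin 4) → RR k :=
  fun a => (if a 0 = i then z (Fin.tail a) else 0) -
    ∑ l, if a l.succ = i then z (Function.update (Fin.tail a) l (a 0)) else 0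

lemma wedge_cons {p : ℕ} (i j : Fin 4) (z : (Fin p → Fin 4) → RR k) (a : Fin p → Fin 4) :
    wedge i z (Fin.cons j a) = (if j = i then z a else 0) -
      ∑ l, if a l = i then z (Function.update a l j) else 0 := by
  simp [wedge]

lemma update_comp_swap_eq {p : ℕ} {a : Fin p → Fin 4} {x y : Fin p} (j : Fin 4)
    (hxy : a x = a y) : Function.update a x j ∘ Equiv.swap x y = Function.update a y j := by
  rw [Function.update_comp_equiv, Equiv.symm_swap, Equiv.swap_apply_left]
  congr 1
  funext z
  rw [Function.comp_apply, Equiv.swap_apply_def]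
  split_ifs with h1 h2
  · rw [h1, hxy]
  · rw [h2, hxy]
  · rfl

lemma wedge_cons_comp_swap {p : ℕ} (i j : Fin 4) {z : (Fin p → Fin 4) → RR k} (hz : z ∈ AltT k p)
    (a : Fin p → Fin 4) {x y : Fin p} (hxy : x ≠ y) :
    wedge i z (Fin.cons j (a ∘ Equiv.swap x y)) = -wedge i z (Fin.cons j a) := by
  rw [wedge_cons, wedge_cons, (hz a x y hxy).2, ← Equiv.sum_comp (Equiv.swap x y)]
  have : ∀ l, Function.update (a ∘ Equiv.swap x y) (Equiv.swap x y l) j =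
      Function.update a l j ∘ Equiv.swap x y := fun l => by
    rw [Function.update_comp_equiv, Equiv.symm_swap]
  simp only [this, (hz _ x y hxy).2, Function.comp_apply, Equiv.swap_apply_self]
  have h1 : (∑ l, if a l = i then -z (Function.update a l j) else 0) =
      -∑ l, if a l = i then z (Function.update a l j) else 0 := by
    rw [← Finset.sum_neg_distrib]
    exact Finset.sum_congr rfl fun l _ => by split_ifs <;> simp
  rw [h1]
  split_ifs <;> ring

lemma cons_comp_swap_zero {p : ℕ} (j : Fin 4) (a : Fin p → Fin 4) (y : Fin p) :
    (Fin.cons j a : Fin (p + 1) → Fin 4) ∘ Equiv.swap 0 y.succ =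
      Fin.cons (a y) (Function.update a y j) := by
  funext z
  refine Fin.cases ?_ (fun z => ?_) z
  · simp
  · rw [Function.comp_apply, Fin.cons_succ]
    by_cases hz : z = y
    · subst hz
      simp
    · rw [Equiv.swap_apply_of_ne_of_ne (Fin.succ_ne_zero z)
        (fun h => hz (Fin.succ_injective p h)), Fin.cons_succ, Function.update_of_ne hz]

lemma wedge_swap_zero {p : ℕ} (i j : Fin 4) {z : (Fin p → Fin 4) → RR k} (hz : z ∈ AltT k p)
    (a : Fin p → Fin 4) (y : Fin p) :
    wedge i z (Fin.cons (a y) (Function.update a y j)) = -wedge i z (Fin.cons j a) := by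
  have h : ∀ l ∈ Finset.univ.erase y, (if Function.update a y j l = i then
      z (Function.update (Function.update a y j) l (a y)) else 0) =
      -(if a l = i then z (Function.update a l j) else 0) := by
    intro l hl
    have hly : l ≠ y := Finset.ne_of_mem_erase hl
    have h1 : Function.update (Function.update a y j) l (a y) =
        Function.update a l j ∘ Equiv.swap l y := by
      funext x
      rw [Function.comp_apply]
      by_cases hxl : x = l
      · subst hxl
        rw [Function.update_self, Equiv.swap_apply_left, Function.update_of_ne hly.symm]
      · rw [Function.update_of_ne hxl]
        by_cases hxy : x = y
        · subst hxy
          rw [Function.update_self, Equiv.swap_apply_right, Function.update_self]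
        · rw [Function.update_of_ne hxy, Equiv.swap_apply_of_ne_of_ne hxl hxy,
            Function.update_of_ne hxl]
    rw [Function.update_of_ne hly, h1, (hz _ l y hly).2]
    split_ifs <;> simp
  rw [wedge_cons, wedge_cons, ← Finset.add_sum_erase _ _ (Finset.mem_univ y),
    ← Finset.add_sum_erase _ _ (Finset.mem_univ y), Finset.sum_congr rfl h,
    Finset.sum_neg_distrib, Function.update_self, Function.update_idem, Function.update_eq_self]
  ring

lemma wedge_eq_zero_of_eq {p : ℕ} (i j : Fin 4) {z : (Fin p → Fin 4) → RR k} (hz : z ∈ AltT k p)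
    {a : Fin p → Fin 4} {x y : Fin p} (hne : x ≠ y) (hxy : a x = a y) :
    wedge i z (Fin.cons j a) = 0 := by
  have h : ∀ l ∈ (Finset.univ.erase x).erase y,
      (if a l = i then z (Function.update a l j) else 0) = 0 := by
    intro l hl
    simp only [Finset.mem_erase, Finset.mem_univ, and_true] at hl
    rw [(hz _ x y hne).1, ite_self]
    rw [Function.update_of_ne hl.2.symm, Function.update_of_ne hl.1.symm, hxy]
  rw [wedge_cons, (hz a x y hne).1 hxy, ite_self,
    ← Finset.add_sum_erase _ _ (Finset.mem_univ x),
    ← Finset.add_sum_erase _ _ (Finset.mem_erase.2 ⟨hne.symm, Finset.mem_univ y⟩),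
    Finset.sum_eq_zero h, ← update_comp_swap_eq j hxy, (hz _ x y hne).2, hxy]
  split_ifs <;> ring

lemma wedge_eq_zero_of_head_eq {p : ℕ} (i : Fin 4) {z : (Fin p → Fin 4) → RR k}
    (hz : z ∈ AltT k p) (a : Fin p → Fin 4) (y : Fin p) :
    wedge i z (Fin.cons (a y) a) = 0 := by
  have h : ∀ l ∈ Finset.univ.erase y,
      (if a l = i then z (Function.update a l (a y)) else 0) = 0 := by
    intro l hl
    have hly : l ≠ y := Finset.ne_of_mem_erase hl
    rw [(hz _ l y hly).1, ite_self]
    rw [Function.update_self, Function.update_of_ne hly.symm]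
  rw [wedge_cons, ← Finset.add_sum_erase _ _ (Finset.mem_univ y), Finset.sum_eq_zero h,
    Function.update_eq_self]
  ring

lemma wedge_mem {p : ℕ} (i : Fin 4) {z : (Fin p → Fin 4) → RR k} (hz : z ∈ AltT k p) :
    wedge i z ∈ AltT k (p + 1) := by
  intro b
  induction b using Fin.consCases with
  | cons j a =>
    intro x y
    refine Fin.cases (Fin.cases (fun h => absurd rfl h) (fun y _ => ?_) y)
      (fun x => Fin.cases (fun _ => ?_) (fun y hxy => ?_) y) x
    · rw [cons_comp_swap_zero]
      refine ⟨fun h => ?_, wedge_swap_zero i j hz a y⟩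
      rw [Fin.cons_zero, Fin.cons_succ] at h
      rw [h, wedge_eq_zero_of_head_eq i hz]
    · rw [Equiv.swap_comm, cons_comp_swap_zero]
      refine ⟨fun h => ?_, wedge_swap_zero i j hz a x⟩
      rw [Fin.cons_zero, Fin.cons_succ] at h
      rw [← h, wedge_eq_zero_of_head_eq i hz]
    · have hne : x ≠ y := fun h => hxy (congrArg Fin.succ h)
      rw [← cons_comp_swap]
      refine ⟨fun h => ?_, wedge_cons_comp_swap i j hz a hne⟩
      rw [Fin.cons_succ, Fin.cons_succ] at h
      exact wedge_eq_zero_of_eq i j hz hne h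

lemma sum_update_eq_zero {p : ℕ} {z : (Fin p → Fin 4) → RR k} (hz : z ∈ ZK k f p)
    (a : Fin p → Fin 4) (l : Fin p) : ∑ j, z (Function.update a l j) * f j = 0 := by
  cases p with
  | zero => exact l.elim0
  | succ p =>
    have h : ∀ j, Function.update a l j =
        (Fin.cons j (Fin.tail (a ∘ Equiv.swap 0 l)) : Fin (p + 1) → Fin 4) ∘ Equiv.swap 0 l := by
      intro j
      have : (Fin.cons j (Fin.tail (a ∘ Equiv.swap 0 l)) : Fin (p + 1) → Fin 4) =
          Function.update (a ∘ Equiv.swap 0 l) 0 j := by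
        conv_rhs => rw [← Fin.cons_self_tail (a ∘ Equiv.swap 0 l), Fin.update_cons_zero]
      rw [this, Function.update_comp_equiv, Equiv.symm_swap, Equiv.swap_apply_left,
        Function.comp_assoc]
      congr 1
      funext x
      simp
    simp only [h, AltT.comp_perm hz.1, mul_assoc, ← Finset.mul_sum]
    have h0 : DK k f p z = 0 := hz.2
    rw [← DK_apply, h0, Pi.zero_apply, mul_zero]

lemma DK_wedge {p : ℕ} (i : Fin 4) {z : (Fin p → Fin 4) → RR k} (hz : z ∈ ZK k f p) :
    DK k f p (wedge i z) = f i • z := by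
  funext a
  simp only [DK_apply, wedge_cons, sub_mul, Finset.sum_sub_distrib, Finset.sum_mul, ite_mul,
    zero_mul]
  rw [Finset.sum_comm, Finset.sum_eq_zero (s := Finset.univ (α := Fin p)), sub_zero]
  · simp [mul_comm]
  · intro l _
    split_ifs
    · exact sum_update_eq_zero hz a l
    · simp

lemma smul_HK_eq_zero {p : ℕ} {g : RR k} (hg : g ∈ Ideal.span (Set.range f)) (x : HK k f p) :
    g • x = 0 := by
  induction hg using Submodule.span_induction with
  | mem g hg =>
    obtain ⟨i, rfl⟩ := hg
    obtain ⟨z, rfl⟩ := Submodule.Quotient.mk_surjective (BZ f p) x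
    exact (Submodule.Quotient.mk_eq_zero (BZ f p)).2
      ⟨wedge i z.1, wedge_mem i (ZK_le_AltT p z.2), DK_wedge i z.2⟩
  | zero => exact zero_smul _ _
  | add g h _ _ hg hh => rw [add_smul, hg, hh, add_zero]
  | smul c g _ hg => rw [smul_assoc, hg, smul_zero]

end Wedge

section BasePoints

variable {k f}

lemma eval_scale {m n : ℕ} {g : RR k} (hg : g ∈ Rpiece k m n) (x : Fin 4 → k) (c d : k) :
    eval (pt k (c • ![x 0, x 1]) (d • ![x 2, x 3])) g = c ^ m * d ^ n * eval x g := by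
  rw [eval_eq', eval_eq', Finset.mul_sum]
  refine Finset.sum_congr rfl fun e he => ?_
  have hw := hg (mem_support_iff.1 he)
  rw [Finsupp.weight_apply, Finsupp.sum_fintype _ _ (by simp), Fin.sum_univ_four] at hw
  simp [stw, Prod.ext_iff] at hw
  obtain ⟨h1, h2⟩ := hw
  have h1' : e 0 + e 1 = m := by exact_mod_cast h1
  have h2' : e 2 + e 3 = n := by exact_mod_cast h2
  rw [← h1', ← h2', Fin.prod_univ_four, Fin.prod_univ_four]
  simp [pt]
  ring

lemma exists_basePt {m n : ℕ} (hf : ∀ i, f i ∈ Rpiece k m n) {x : Fin 4 → k}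
    (hx : ∀ i, eval x (f i) = 0) (ha : ![x 0, x 1] ≠ 0) (hb : ![x 2, x 3] ≠ 0) :
    ∃ P ∈ BasePts k f, ∃ c d : kˣ, c • ![x 0, x 1] = P.1.rep ∧ d • ![x 2, x 3] = P.2.rep := by
  obtain ⟨c, hc⟩ := Projectivization.exists_smul_eq_mk_rep k _ ha
  obtain ⟨d, hd⟩ := Projectivization.exists_smul_eq_mk_rep k _ hb
  refine ⟨(Projectivization.mk k _ ha, Projectivization.mk k _ hb), fun i => ?_, c, d, hc, hd⟩
  rw [← hc, ← hd]
  have := eval_scale (hf i) x c d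
  rw [hx, mul_zero] at this
  exact this

lemma exists_slope {S : Set (Projectivization k (Fin 2 → k))} (hS : S.Finite) :
    ∃ c : k, ∀ P ∈ S, P.rep 0 + c * P.rep 1 ≠ 0 := by
  have := IsAlgClosed.instInfinite (K := k)
  obtain ⟨c, hc⟩ := (hS.image fun P => -P.rep 0 / P.rep 1).exists_notMem
  refine ⟨c, fun P hP h => hc ⟨P, hP, ?_⟩⟩
  by_cases h1 : P.rep 1 = 0
  · refine absurd (funext fun i => ?_) P.rep_nonzero
    fin_cases i
    · simpa [h1] using h
    · exact h1
  · field_simp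
    linear_combination -h

lemma exists_principal {m n : ℕ} (hf : ∀ i, f i ∈ Rpiece k m n) (hB : (BasePts k f).Finite) :
    ∃ l ∈ Rpiece k 1 1, l ∈ Ideal.span (Set.range (uR k)) ∧
      ∀ x : Fin 4 → k, (∀ i, eval x (f i) = 0) → eval x l = 0 → ∀ j, eval x (uR k j) = 0 := by
  obtain ⟨c, hc⟩ := exists_slope (hB.image Prod.fst)
  obtain ⟨d, hd⟩ := exists_slope (hB.image Prod.snd)
  have hl : (X 0 + C c * X 1) * (X 2 + C d * X 3) = C 1 * uR k 0 + C d * uR k 1 + C c * uR k 2 +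
      C (c * d) * uR k 3 := by
    simp [uR]
    ring
  refine ⟨(X 0 + C c * X 1) * (X 2 + C d * X 3), ?_, ?_, ?_⟩
  · rw [hl]
    have : ∀ (e : k) j, C e * uR k j ∈ Rpiece k 1 1 := fun e j => by
      rw [C_mul']
      exact Submodule.smul_mem _ _ (uR_mem j)
    exact add_mem (add_mem (add_mem (this _ _) (this _ _)) (this _ _)) (this _ _)
  · rw [hl]
    have : ∀ (e : k) j, C e * uR k j ∈ Ideal.span (Set.range (uR k)) := fun e j =>
      Ideal.mul_mem_left _ _ (Ideal.subset_span ⟨j, rfl⟩)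
    exact add_mem (add_mem (add_mem (this _ _) (this _ _)) (this _ _)) (this _ _)
  · intro x hx hlx j
    by_cases ha : ![x 0, x 1] = 0
    · have h0 : x 0 = 0 := congrFun ha 0
      have h1 : x 1 = 0 := congrFun ha 1
      fin_cases j <;> simp [uR, h0, h1]
    by_cases hb : ![x 2, x 3] = 0
    · have h0 : x 2 = 0 := congrFun hb 0
      have h1 : x 3 = 0 := congrFun hb 1
      fin_cases j <;> simp [uR, h0, h1]
    obtain ⟨P, hP, r, s, hr, hs⟩ := exists_basePt hf hx ha hb
    have h1 := hc P.1 ⟨P, hP, rfl⟩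
    have h2 := hd P.2 ⟨P, hP, rfl⟩
    rw [← hr] at h1
    rw [← hs] at h2
    simp only [map_mul, map_add, eval_X, eval_C] at hlx
    rcases mul_eq_zero.1 hlx with h | h
    · refine absurd ?_ h1
      simp only [Pi.smul_apply, Units.smul_def, smul_eq_mul, Matrix.cons_val_zero,
        Matrix.cons_val_one]
      linear_combination (r : k) * h
    · refine absurd ?_ h2
      simp only [Pi.smul_apply, Units.smul_def, smul_eq_mul, Matrix.cons_val_zero,
        Matrix.cons_val_one]
      linear_combination (s : k) * h

lemma LCvanish_HK {m n : ℕ} (hf : ∀ i, f i ∈ Rpiece k m n) (hB : (BasePts k f).Finite)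
    (p : ℕ) {q : ℕ} (hq : 2 ≤ q) (μ ν : ℤ) : LCvanish (uR k) (PH k f m n p) q μ ν := by
  obtain ⟨l, hl, hlu, hlx⟩ := exists_principal hf hB
  set y : Option (Fin 4) → RR k := fun o => o.elim l f with hy
  have hrad : ∀ j, ∃ N, uR k j ^ N ∈ Ideal.span (Set.range y) := by
    intro j
    rw [← Ideal.mem_radical_iff, ← vanishingIdeal_zeroLocus_eq_radical (K := k),
      mem_vanishingIdeal_iff]
    intro x hx
    rw [zeroLocus_span] at hx
    have h0 : ∀ o, eval x (y o) = 0 := fun o => by simpa [aeval_eq_eval] using hx _ ⟨o, rfl⟩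
    simpa [aeval_eq_eval] using hlx x (fun i => h0 (some i)) (h0 none) j
  choose N hN using hrad
  have hN' : ∀ j, uR k j ^ (∑ i, N i) ∈ Ideal.span (Set.range y) := fun j =>
    Ideal.pow_mem_of_pow_mem _ (hN j) (Finset.single_le_sum (f := N) (fun _ _ => Nat.zero_le _)
      (Finset.mem_univ j))
  have hc : ∀ j, ∃ c ∈ Rpiece k ((∑ i, N i : ℕ) - 1) ((∑ i, N i : ℕ) - 1),
      ∀ x : HK k f p, uR k j ^ (∑ i, N i) • x = (c * l) • x := by
    intro j
    obtain ⟨e₀, he₀⟩ := Ideal.mem_span_range_iff_exists_fun.1 (hN' j)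
    have hyd : ∀ o, y o ∈ Rpiece k (o.elim 1 fun _ => (m : ℤ)) (o.elim 1 fun _ => (n : ℤ)) := by
      rintro (_ | i)
      · exact hl
      · exact hf i
    obtain ⟨e, he, hue⟩ := exists_homogeneous_coeff (Rpiece_pow (uR_mem (k := k) j) _) hyd he₀.symm
    refine ⟨e none, by simpa using he none, fun x => ?_⟩
    rw [hue, Fintype.sum_option, add_smul]
    have : (∑ i, e (some i) * y (some i)) ∈ Ideal.span (Set.range f) :=
      Ideal.sum_mem _ fun i _ => Ideal.mul_mem_left _ _ (Ideal.subset_span ⟨i, rfl⟩)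
    rw [smul_HK_eq_zero this, add_zero]
    rfl
  choose c hc hcl using hc
  obtain ⟨q, rfl⟩ := Nat.exists_eq_add_of_le' hq
  exact LCvanish_of_principal (PH_grStable m n p) hl hlu hc hcl μ ν

end BasePoints

section Coprime

variable {k f}

lemma exists_eval_ne_zero_left {m n : ℕ} (hf : ∀ i, f i ∈ Rpiece k m n)
    (hB : (BasePts k f).Finite) {a : Fin 2 → k} (ha : a ≠ 0) :
    ∃ y i, eval ![a 0, a 1, 1, y] (f i) ≠ 0 := by
  by_contra! h
  have := IsAlgClosed.instInfinite (K := k)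
  obtain ⟨y, hy⟩ := (hB.image fun P => P.2.rep 1 / P.2.rep 0).exists_notMem
  obtain ⟨P, hP, c, d, -, hd⟩ := exists_basePt hf (h y)
    (fun h0 => ha (funext fun i => by fin_cases i <;> [exact congrFun h0 0; exact congrFun h0 1]))
    (fun h0 => one_ne_zero (congrFun h0 0))
  refine hy ⟨P, hP, ?_⟩
  simp only [← hd]
  simp [Units.smul_def]

lemma exists_eval_ne_zero_right {m n : ℕ} (hf : ∀ i, f i ∈ Rpiece k m n)
    (hB : (BasePts k f).Finite) : ∃ y i, eval ![1, y, 0, 1] (f i) ≠ 0 := by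
  by_contra! h
  have := IsAlgClosed.instInfinite (K := k)
  obtain ⟨y, hy⟩ := (hB.image fun P => P.1.rep 1 / P.1.rep 0).exists_notMem
  obtain ⟨P, hP, c, d, hc, -⟩ := exists_basePt hf (h y)
    (fun h0 => one_ne_zero (congrFun h0 0)) (fun h0 => one_ne_zero (congrFun h0 1))
  refine hy ⟨P, hP, ?_⟩
  simp only [← hc]
  simp [Units.smul_def]

lemma eval_eq_zero_of_dvd_of_totalDegree_le_one {g l : RR k} (hg : Prime g) (hl : l ≠ 0)
    (hd : l.totalDegree ≤ 1) (hgl : g ∣ l) {x : Fin 4 → k} (hx : eval x l = 0) :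
    eval x g = 0 := by
  obtain ⟨q, rfl⟩ := hgl
  have hq : q ≠ 0 := right_ne_zero_of_mul hl
  rw [totalDegree_mul_of_isDomain hg.ne_zero hq] at hd
  have hg0 : g.totalDegree ≠ 0 := fun h0 => by
    rw [totalDegree_eq_zero_iff_eq_C] at h0
    refine hg.not_isUnit ?_
    rw [h0]
    refine (IsUnit.mk0 _ fun h => hg.ne_zero ?_).map C
    rw [h0, h, C_0]
  have hq0 : q.totalDegree = 0 := by lia
  rw [totalDegree_eq_zero_iff_eq_C] at hq0
  rw [hq0, map_mul, eval_C] at hx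
  refine (mul_eq_zero.1 hx).resolve_right fun h => hq ?_
  rw [hq0, h, C_0]

lemma totalDegree_linear_le_one (a b : k) (i j : Fin 4) :
    (C a * X i - C b * X j : RR k).totalDegree ≤ 1 := by
  have h : ∀ (c : k) (l : Fin 4), (C c * X l : RR k).totalDegree ≤ 1 := fun c l =>
    (totalDegree_mul _ _).trans (by simp)
  exact (totalDegree_sub _ _).trans (max_le (h _ _) (h _ _))

lemma exists_not_dvd {m n : ℕ} (hf : ∀ i, f i ∈ Rpiece k m n) (hB : (BasePts k f).Finite)
    {g : RR k} (hg : Prime g) : ∃ i, ¬ g ∣ f i := by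
  by_contra! hdvd
  have hleft : ∀ a : Fin 2 → k, a ≠ 0 → ¬ g ∣ C (a 1) * X 0 - C (a 0) * X 1 := by
    intro a ha hga
    obtain ⟨y, i, hy⟩ := exists_eval_ne_zero_left hf hB ha
    refine hy (zero_dvd_iff.1 ?_)
    rw [← eval_eq_zero_of_dvd_of_totalDegree_le_one hg ?_ (totalDegree_linear_le_one _ _ _ _) hga
      (x := ![a 0, a 1, 1, y]) (by simp; ring)]
    · exact map_dvd (eval _) (hdvd i)
    · intro h0
      refine ha (funext fun i => ?_)
      fin_cases i
      · simpa using congrArg (eval ![0, 1, 0, 0]) h0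
      · simpa using congrArg (eval ![1, 0, 0, 0]) h0
  have hright : ¬ g ∣ X 2 := by
    intro hga
    obtain ⟨y, i, hy⟩ := exists_eval_ne_zero_right hf hB
    have h0 := map_dvd (eval ![1, y, 0, 1]) (hdvd i)
    rw [eval_eq_zero_of_dvd_of_totalDegree_le_one hg (X_ne_zero 2) (totalDegree_X _).le hga
      (by simp), zero_dvd_iff] at h0
    exact hy h0
  have hE : (X 0 * X 2 * ∏ P ∈ hB.toFinset, (C (P.1.rep 1) * X 0 - C (P.1.rep 0) * X 1) : RR k) ∈
      (Ideal.span {g}).radical := by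
    rw [← vanishingIdeal_zeroLocus_eq_radical (K := k), mem_vanishingIdeal_iff]
    intro x hx
    rw [zeroLocus_span] at hx
    have hxg : eval x g = 0 := by simpa [aeval_eq_eval] using hx g rfl
    have hxf : ∀ i, eval x (f i) = 0 := fun i => by
      rw [← zero_dvd_iff, ← hxg]
      exact map_dvd (eval _) (hdvd i)
    rw [aeval_eq_eval, map_mul, map_mul, eval_X, eval_X, map_prod]
    by_cases ha : ![x 0, x 1] = 0
    · rw [show x 0 = 0 from congrFun ha 0, zero_mul, zero_mul]
    by_cases hb : ![x 2, x 3] = 0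
    · rw [show x 2 = 0 from congrFun hb 0, mul_zero, zero_mul]
    obtain ⟨P, hP, r, s, hr, -⟩ := exists_basePt hf hxf ha hb
    rw [Finset.prod_eq_zero (hB.mem_toFinset.2 hP), mul_zero]
    simp only [← hr]
    simp [Units.smul_def]
    ring
  obtain ⟨N, hN⟩ := hE
  rcases hg.dvd_or_dvd (hg.dvd_of_dvd_pow (Ideal.mem_span_singleton.1 hN)) with h | h
  · rcases hg.dvd_or_dvd h with h | h
    · refine hleft ![0, 1] (fun h0 => one_ne_zero (congrFun h0 1)) ?_
      simpa using h
    · exact hright h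
  · obtain ⟨P, -, hP⟩ := (hg.dvd_finsetProd_iff _).1 h
    exact hleft _ P.1.rep_nonzero hP

lemma dvd_of_dvd_mul_of_forall_prime {ι A : Type*} [CommRing A] [IsDomain A]
    [UniqueFactorizationMonoid A] {z : ι → A} (hz : ∀ g, Prime g → ∃ i, ¬ g ∣ z i) {x : A}
    (hx : x ≠ 0) : ∀ y, (∀ i, x ∣ y * z i) → x ∣ y := by
  induction x using UniqueFactorizationMonoid.induction_on_prime with
  | h₁ => exact absurd rfl hx
  | h₂ x hu => exact fun y _ => hu.dvd
  | h₃ x g hx0 hg ih =>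
    intro y hy
    obtain ⟨i, hi⟩ := hz g hg
    obtain ⟨y, rfl⟩ := (hg.dvd_or_dvd ((dvd_mul_right g x).trans (hy i))).resolve_right hi
    refine mul_dvd_mul_left g (ih hx0 y fun j => ?_)
    have := hy j
    rwa [mul_assoc, mul_dvd_mul_iff_left hg.ne_zero] at this

end Coprime

section TopHomology

variable {k f}

lemma cons_vec_three (i a b : Fin 4) : (Fin.cons i ![a, b] : Fin 3 → Fin 4) = ![i, a, b] := rfl

lemma AltT.eq_zero_of_three {Y : (Fin 3 → Fin 4) → RR k} (hY : Y ∈ AltT k 3) {a b c : Fin 4}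
    (h : a = b ∨ a = c ∨ b = c) : Y ![a, b, c] = 0 := by
  rcases h with h | h | h
  · exact (hY ![a, b, c] 0 1 (by decide)).1 h
  · exact (hY ![a, b, c] 0 2 (by decide)).1 h
  · exact (hY ![a, b, c] 1 2 (by decide)).1 h

lemma ZK_three_relations {Y : (Fin 3 → Fin 4) → RR k} (hY : Y ∈ ZK k f 3) :
    Y ![0, 2, 3] * f 0 = -(Y ![1, 2, 3] * f 1) ∧ Y ![0, 1, 3] * f 0 = Y ![1, 2, 3] * f 2 ∧
      Y ![0, 1, 2] * f 0 = -(Y ![1, 2, 3] * f 3) := by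
  have hA := hY.1
  have hD : DK k f 2 Y = 0 := hY.2
  have h := fun a b : Fin 4 => congrFun hD ![a, b]
  simp only [DK_apply, cons_vec_three, Fin.sum_univ_four, Pi.zero_apply] at h
  have e1 : Y ![2, 1, 3] = -Y ![1, 2, 3] := by
    rw [← (hA ![1, 2, 3] 0 1 (by decide)).2]
    congr 1
    decide
  have e2 : Y ![3, 1, 2] = Y ![1, 2, 3] := by
    have e3 : Y ![3, 2, 1] = -Y ![1, 2, 3] := by
      rw [← (hA ![1, 2, 3] 0 2 (by decide)).2]
      congr 1
      decide
    rw [← neg_neg (Y ![1, 2, 3]), ← e3, ← (hA ![3, 2, 1] 1 2 (by decide)).2]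
    congr 1
    decide
  have h1 := h 2 3
  have h2 := h 1 3
  have h3 := h 1 2
  rw [AltT.eq_zero_of_three hA (a := 2) (by decide), AltT.eq_zero_of_three hA (a := 3) (by decide)]
    at h1
  rw [AltT.eq_zero_of_three hA (a := 1) (by decide), AltT.eq_zero_of_three hA (a := 3) (by decide),
    e1] at h2
  rw [AltT.eq_zero_of_three hA (a := 1) (by decide), AltT.eq_zero_of_three hA (a := 2) (by decide),
    e2] at h3
  exact ⟨by linear_combination h1, by linear_combination h2, by linear_combination h3⟩

lemma strictMono_three {a : Fin 3 → Fin 4} (ha : StrictMono a) :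
    a = ![0, 1, 2] ∨ a = ![0, 1, 3] ∨ a = ![0, 2, 3] ∨ a = ![1, 2, 3] := by
  have h1 := ha (show (0 : Fin 3) < 1 by decide)
  have h2 := ha (show (1 : Fin 3) < 2 by decide)
  have h3 : a = ![a 0, a 1, a 2] := by
    funext i
    fin_cases i <;> rfl
  rw [h3]
  generalize a 0 = x at *
  generalize a 1 = y at *
  generalize a 2 = z at *
  clear h3
  revert x y z
  decide

lemma eq_zero_of_mem_ZK_three {Y : (Fin 3 → Fin 4) → RR k} (hY : Y ∈ ZK k f 3) (h0 : f 0 ≠ 0)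
    (h : Y ![1, 2, 3] = 0) : Y = 0 := by
  obtain ⟨h1, h2, h3⟩ := ZK_three_relations hY
  rw [h, zero_mul, neg_zero] at h1 h3
  rw [h, zero_mul] at h2
  refine AltT.ext_strictMono hY.1 (zero_mem _) fun a ha => ?_
  rcases strictMono_three ha with rfl | rfl | rfl | rfl
  · exact (mul_eq_zero.1 h3).resolve_right h0
  · exact (mul_eq_zero.1 h2).resolve_right h0
  · exact (mul_eq_zero.1 h1).resolve_right h0
  · exact h

lemma DK_three_apply {W : (Fin 4 → Fin 4) → RR k} (hW : W ∈ AltT k 4) :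
    DK k f 3 W ![1, 2, 3] = W ![0, 1, 2, 3] * f 0 := by
  have h : ∀ (i : Fin 4) (j : Fin 4), j ≠ 0 → ![i, 1, 2, 3] 0 = ![i, 1, 2, 3] j →
      W ![i, 1, 2, 3] = 0 := fun i j hj hij => (hW _ 0 j hj.symm).1 hij
  rw [DK_apply, Fin.sum_univ_four]
  change W ![0, 1, 2, 3] * f 0 + W ![1, 1, 2, 3] * f 1 + W ![2, 1, 2, 3] * f 2 +
    W ![3, 1, 2, 3] * f 3 = _
  rw [h 1 1 (by decide) rfl, h 2 2 (by decide) rfl, h 3 3 (by decide) rfl]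
  ring

lemma subsingleton_HK {p : ℕ} (h : ZK k f p ≤ BK k f p) : Subsingleton (HK k f p) := by
  refine subsingleton_of_forall_eq 0 fun x => ?_
  obtain ⟨z, rfl⟩ := Submodule.Quotient.mk_surjective (BZ f p) x
  exact (Submodule.Quotient.mk_eq_zero (BZ f p)).2 (h z.2)

lemma subsingleton_HK_three {m n : ℕ} (hf : ∀ i, f i ∈ Rpiece k m n) (hB : (BasePts k f).Finite)
    (h0 : f 0 ≠ 0) : Subsingleton (HK k f 3) := by
  refine subsingleton_HK fun Y hY => ?_
  obtain ⟨h1, h2, h3⟩ := ZK_three_relations hY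
  obtain ⟨c, hc⟩ := dvd_of_dvd_mul_of_forall_prime (fun g hg => exists_not_dvd hf hB hg) h0
    (Y ![1, 2, 3]) (by
      rw [Fin.forall_fin_succ, Fin.forall_fin_succ, Fin.forall_fin_two]
      exact ⟨⟨_, mul_comm _ _⟩, ⟨-Y ![0, 2, 3], (neg_eq_iff_eq_neg.2 h1).symm.trans (by ring)⟩,
        ⟨Y ![0, 1, 3], h2.symm.trans (mul_comm _ _)⟩, ⟨-Y ![0, 1, 2], (neg_eq_iff_eq_neg.2 h3).symm.trans (by ring)⟩⟩)
  have hV := alternize_mem (k := k) (p := 4) fun _ => c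
  refine ⟨_, hV, (sub_eq_zero.1 (eq_zero_of_mem_ZK_three (f := f)
    (sub_mem hY (BK_le_ZK 3 ⟨_, hV, rfl⟩)) h0 ?_)).symm⟩
  have hmono : StrictMono (![0, 1, 2, 3] : Fin 4 → Fin 4) := by decide
  rw [Pi.sub_apply, DK_three_apply hV, alternize_apply _ hmono.injective,
    Tuple.sort_eq_refl_iff_monotone.2 hmono.monotone, hc]
  simp
  ring

lemma subsingleton_HK_four (h0 : f 0 ≠ 0) : Subsingleton (HK k f 4) := by
  refine subsingleton_HK fun W hW => ?_
  have hD : DK k f 3 W = 0 := hW.2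
  have h := DK_three_apply (f := f) hW.1
  rw [hD, Pi.zero_apply, eq_comm, mul_eq_zero, or_iff_left h0] at h
  convert zero_mem (BK k f 4)
  refine AltT.ext_strictMono hW.1 (zero_mem _) fun a ha => ?_
  have : a = ![0, 1, 2, 3] := by
    have h1 := ha (show (0 : Fin 4) < 1 by decide)
    have h2 := ha (show (1 : Fin 4) < 2 by decide)
    have h3 := ha (show (2 : Fin 4) < 3 by decide)
    funext i
    fin_cases i <;> ext <;> simp <;> omega
  rw [this, h, Pi.zero_apply]

end TopHomology

section Assembly

variable {k f} {m n : ℕ}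
variable {p : ℕ} {μ ν : ℤ}

lemma LCvanish_ZK_of_BK {q : ℕ} (hf : ∀ i, f i ∈ Rpiece k m n) (hB : (BasePts k f).Finite)
    (hq : 2 ≤ q) (h : LCvanish (uR k) (subPiece m n (BK k f p)) q μ ν) :
    LCvanish (uR k) (subPiece m n (ZK k f p)) q μ ν :=
  (grExact_BK_ZK_HK m n p).vanish_mid (subPiece_grStable m n _).shiftStable h
    (LCvanish_HK hf hB p hq μ ν)

lemma LCvanish_BK {q : ℕ} (hf : ∀ i, f i ∈ Rpiece k m n)
    (hK : LCvanish (uR k) (KP k m n (p + 1)) q μ ν)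
    (hZ : LCvanish (uR k) (subPiece m n (ZK k f (p + 1))) (q + 1) μ ν) :
    LCvanish (uR k) (subPiece m n (BK k f p)) q μ ν :=
  (grExact_ZK_AltT_BK hf p).vanish_right (subPiece_grStable m n _).shiftStable
    (LCvanish_AltT hK) hZ

lemma LCvanish_three_ZK (hf : ∀ i, f i ∈ Rpiece k m n) (hB : (BasePts k f).Finite)
    (h3 : LCvanish (uR k) (KP k m n (p + 1)) 3 μ ν) :
    LCvanish (uR k) (subPiece m n (ZK k f p)) 3 μ ν :=
  LCvanish_ZK_of_BK hf hB (by decide)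
    (LCvanish_BK hf h3 (LCvanish_four (subPiece_grStable m n _) μ ν))

lemma LCvanish_two_BK (hf : ∀ i, f i ∈ Rpiece k m n) (hB : (BasePts k f).Finite)
    (h2 : LCvanish (uR k) (KP k m n (p + 1)) 2 μ ν)
    (h3 : LCvanish (uR k) (KP k m n (p + 2)) 3 μ ν) :
    LCvanish (uR k) (subPiece m n (BK k f p)) 2 μ ν :=
  LCvanish_BK hf h2 (LCvanish_three_ZK hf hB h3)

lemma LCvanish_one_ZK (hf : ∀ i, f i ∈ Rpiece k m n) :
    LCvanish (uR k) (subPiece m n (ZK k f p)) 1 μ ν := by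
  cases p with
  | zero => exact LCvanish_AltT (LCvanish_one_KP m n 0 μ ν)
  | succ p =>
    exact (grExact_ZK_AltT_BK hf p).vanish_left (subPiece_grStable m n _).shiftStable
      (LCvanish_AltT (LCvanish_one_KP m n _ μ ν)) (LCvanish_zero_subPiece m n _ μ ν)

lemma LCvanish_zero_HK (hf : ∀ i, f i ∈ Rpiece k m n) (hB : (BasePts k f).Finite)
    (h2 : LCvanish (uR k) (KP k m n (p + 2)) 2 μ ν)
    (h3 : LCvanish (uR k) (KP k m n (p + 3)) 3 μ ν) :
    LCvanish (uR k) (PH k f m n p) 0 μ ν :=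
  (grExact_BK_ZK_HK m n p).vanish_right (subPiece_grStable m n _).shiftStable
    (LCvanish_zero_subPiece m n _ μ ν)
    (LCvanish_BK hf (LCvanish_one_KP m n _ μ ν)
      (LCvanish_ZK_of_BK hf hB le_rfl (LCvanish_two_BK hf hB h2 h3)))

lemma LCvanish_one_HK (hf : ∀ i, f i ∈ Rpiece k m n) (hB : (BasePts k f).Finite)
    (h2 : LCvanish (uR k) (KP k m n (p + 1)) 2 μ ν)
    (h3 : LCvanish (uR k) (KP k m n (p + 2)) 3 μ ν) :
    LCvanish (uR k) (PH k f m n p) 1 μ ν :=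
  (grExact_BK_ZK_HK m n p).vanish_right (subPiece_grStable m n _).shiftStable
    (LCvanish_one_ZK hf) (LCvanish_two_BK hf hB h2 h3)

end Assembly

theorem statement0
    (m n : ℕ) (hm : 1 ≤ m) (hn : 1 ≤ n)
    -- the `fᵢ` are bihomogeneous of bidegree `(m,n)`
    (hf : ∀ i, f i ∈ Rpiece k m n)
    -- the `fᵢ` minimally generate the ideal `I = (f₀,…,f₃)`
    (hmin : LinearIndependent k f)
    -- the closure of the image of `φ` is a surface `𝒮 = V(F) ⊆ ℙ³`
    (F : SS k) (hF : F ≠ 0)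
    (hFeq : RingHom.ker (aeval (R := k) f).toRingHom = Ideal.span {F})
    -- the base scheme `ℬ = V(I)` is finite
    (hBfin : (BasePts k f).Finite)
    -- every base point of `φ` is locally defined by at most three generators
    (hloc : ∀ a b, IsBasePoint k f a b → LocGen k (Ideal.span (Set.range f)) a b 3)
    -- `r = Σ_p d_p` is the degree of the base scheme, i.e. the eventual value of the
    -- Hilbert function of `R/I`
    (r : ℕ)
    (hr : ∃ A₀ B₀ : ℤ, ∀ μ ν : ℤ, A₀ ≤ μ → B₀ ≤ ν →
      HFq k (Ideal.span (Set.range f)) μ ν = r)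
 :
    -- `H₄ = H₃ = 0`:
    (Subsingleton (HK k f 3) ∧ Subsingleton (HK k f 4)) ∧
    -- `H^i_𝔪(H_p) = 0` for every `i > 1` and every `p` (all bigraded pieces vanish):
    (∀ (p i : ℕ), 2 ≤ i → ∀ μ ν : ℤ,
      LCvanish (B := k) (uR k) (PH k f m n p) i μ ν) ∧
    -- for `j = 0, 1` and every `p`: `H^j_𝔪(H_p)_{(μ,ν)} = 0` whenever
    -- `H²_𝔪(K_{p+2−j})_{(μ,ν)} = 0` and `H³_𝔪(K_{p+3−j})_{(μ,ν)} = 0`: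
    (∀ (p j : ℕ), j ≤ 1 → ∀ μ ν : ℤ,
      LCvanish (B := k) (uR k) (KP k m n (p + 2 - j)) 2 μ ν →
      LCvanish (B := k) (uR k) (KP k m n (p + 3 - j)) 3 μ ν →
      LCvanish (B := k) (uR k) (PH k f m n p) j μ ν) := by
  have h0 : f 0 ≠ 0 := hmin.ne_zero 0
  refine ⟨⟨subsingleton_HK_three hf hBfin h0, subsingleton_HK_four h0⟩,
    fun p i hi μ ν => LCvanish_HK hf hBfin p hi μ ν, fun p j hj μ ν h2 h3 => ?_⟩
  interval_cases j
  · exact LCvanish_zero_HK hf hBfin h2 h3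
  · exact LCvanish_one_HK hf hBfin h2 h3
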